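/- arXiv:1907.07926 — 3 statements merged into one kernel-verified Lean document; each statement's English description precedes it below -/
import Mathlib

section
/- Let 2 < p < 6, 2 < q < 4 and μ > 0. Suppose F_{p,q} is bounded below on the set of u ∈ H¹(ℝ) with ‖u‖₂² = μ and that there exists u₀ in this set with F_{p,q}(u₀) < 0. Then the constrained infimum is attained: there exists u ∈ H¹(ℝ) with ‖u‖₂² = μ such that F_{p,q}(u) ≤ F_{p,q}(v) for every v ∈ H¹(ℝ) with ‖v‖₂² = μ. -/
open MeasureTheory Real Set

noncomputable section

/-- `u ∈ H¹(ℝ)` with weak derivative `u'`: `u` is continuous, square-integrable,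
`u'` is square-integrable, and `u(b) − u(a) = ∫_a^b u'(t) dt` for all `a ≤ b`. -/
def IsH1 (u u' : ℝ → ℝ) : Prop :=
  Continuous u ∧ Integrable (fun x => (u x) ^ 2) ∧ Integrable (fun x => (u' x) ^ 2) ∧
    ∀ a b : ℝ, a ≤ b → u b - u a = ∫ t in a..b, u' t

/-- The mass `‖u‖₂² = ∫_ℝ u(x)² dx`. -/
def mass (u : ℝ → ℝ) : ℝ := ∫ x, (u x) ^ 2

/-- `D_q(u) = (1/2)∫ u'² − (1/q)|u(0)|^q`. -/
def Dfun (q : ℝ) (u u' : ℝ → ℝ) : ℝ :=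
  (1 / 2) * (∫ x, (u' x) ^ 2) - (1 / q) * |u 0| ^ q

/-- `F_{p,q}(u) = (1/2)∫ u'² − (1/p)∫ |u|^p − (1/q)|u(0)|^q`. -/
def Ffun (p q : ℝ) (u u' : ℝ → ℝ) : ℝ :=
  (1 / 2) * (∫ x, (u' x) ^ 2) - (1 / p) * (∫ x, |u x| ^ p) - (1 / q) * |u 0| ^ q

open Filter Topology

/-!
Replacing each function of a minimizing sequence by a translate that is almost maximal at `0` can
only lower the energy. By the one-dimensional Gagliardo–Nirenberg inequality the sequence is then
bounded in `H¹`, so along a subsequence it converges weakly to some `u`, and pointwise. Vanishing,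
`u(0) = 0`, would make the sequence converge to `0` uniformly, hence the infimum `J` nonnegative.
By Brezis–Lieb splitting, `F(u)` plus the energy of the remainder is asymptotically at most `J`, and
the mass of the remainder tends to `μ - m`, with `m` the mass of `u`. Scaling up to mass `μ` gives
`F(v) ≥ (mass v / μ) J` for masses at most `μ`, hence `F(u) ≤ (m / μ) J`. If `m < μ`, the same
scaling of `u` is strict because `u(0) ≠ 0`, a contradiction; so `m = μ` and `F(u) = J`.
-/

section General

lemma exists_le_and_forall_le_two_mul {α : Type*} {f : α → ℝ} (hf : BddAbove (range f))
    (hf₀ : ∀ x, 0 ≤ f x) (x₀ : α) : ∃ y, f x₀ ≤ f y ∧ ∀ x, f x ≤ 2 * f y := by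
  by_cases hx₀ : ∀ x, f x ≤ 2 * f x₀
  · exact ⟨x₀, le_rfl, hx₀⟩
  push Not at hx₀
  obtain ⟨x₁, hx₁⟩ := hx₀
  have hle (x : α) : f x ≤ ⨆ x, f x := le_ciSup hf x
  have : Nonempty α := ⟨x₀⟩
  obtain ⟨y, hy⟩ : ∃ y, (⨆ x, f x) / 2 < f y :=
    exists_lt_of_lt_ciSup (by linarith [hle x₁, hf₀ x₀])
  exact ⟨y, by linarith [hle x₁], fun x => by linarith [hle x]⟩

lemma tendsto_mul_rpow_sub_add_atTop {a b c r s t : ℝ} (ha : 0 < a) (hr : 0 < r) (hs : s < r)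
    (ht : t < r) : Tendsto (fun x : ℝ => a * x ^ r - (b * x ^ s + c * x ^ t)) atTop atTop := by
  have hlim : Tendsto (fun x : ℝ => a - (b * x ^ (-(r - s)) + c * x ^ (-(r - t)))) atTop
      (𝓝 (a - (b * 0 + c * 0))) :=
    (((tendsto_rpow_neg_atTop (sub_pos.2 hs)).const_mul b).add
      ((tendsto_rpow_neg_atTop (sub_pos.2 ht)).const_mul c)).const_sub a
  refine ((tendsto_rpow_atTop hr).atTop_mul_pos (by simpa using ha) hlim).congr' ?_
  filter_upwards [eventually_gt_atTop 0] with x hx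
  have hrpow (e : ℝ) : x ^ r * x ^ (-(r - e)) = x ^ e := by
    rw [← rpow_add hx]; congr 1; ring
  rw [← hrpow s, ← hrpow t]
  ring

lemma add_rpow_le_rpow_add_mul {p s t : ℝ} (hp : 1 ≤ p) (hs : 0 ≤ s) (ht : 0 ≤ t) :
    (s + t) ^ p ≤ s ^ p + p * (s + t) ^ (p - 1) * t := by
  rcases (add_nonneg hs ht).eq_or_lt with h₀ | hpos
  · obtain ⟨rfl, rfl⟩ := (add_eq_zero_iff_of_nonneg hs ht).1 h₀.symm
    simp
  have hquot : s / (s + t) = 1 + -(t / (s + t)) := by field_simp; ring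
  have bernoulli : 1 + p * -(t / (s + t)) ≤ (s / (s + t)) ^ p := by
    rw [hquot]
    exact one_add_mul_self_le_rpow_one_add
      (neg_le_neg ((div_le_one hpos).2 (le_add_of_nonneg_left hs))) hp
  rw [div_rpow hs hpos.le, le_div_iff₀ (rpow_pos_of_pos hpos p)] at bernoulli
  have hsplit : (s + t) ^ p = (s + t) ^ (p - 1) * (s + t) := by
    rw [← rpow_add_one hpos.ne', sub_add_cancel]
  have hexpand : (1 + p * -(t / (s + t))) * (s + t) ^ p =
      (s + t) ^ p - p * (s + t) ^ (p - 1) * t := by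
    rw [hsplit]; field_simp; ring
  linarith

lemma add_rpow_le_rpow_add_rpow_add_mul {p s t : ℝ} (hp : 2 ≤ p) (hs : 0 ≤ s) (ht : 0 ≤ t) :
    (s + t) ^ p ≤ s ^ p + t ^ p + 2 * (p - 1) * (s + t) ^ (p - 2) * (s * t) := by
  have hsucc {x : ℝ} (hx : 0 ≤ x) : x ^ p = x ^ (p - 1) * x := by
    rw [← rpow_add_one' hx (by linarith), sub_add_cancel]
  have h₁ := add_rpow_le_rpow_add_mul (p := p - 1) (by linarith) hs ht
  have h₂ := add_rpow_le_rpow_add_mul (p := p - 1) (by linarith) ht hs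
  rw [add_comm t s] at h₂
  rw [show p - 1 - 1 = p - 2 by ring] at h₁ h₂
  calc (s + t) ^ p = (s + t) ^ (p - 1) * s + (s + t) ^ (p - 1) * t := by
        rw [hsucc (add_nonneg hs ht)]; ring
    _ ≤ (s ^ (p - 1) + (p - 1) * (s + t) ^ (p - 2) * t) * s +
        (t ^ (p - 1) + (p - 1) * (s + t) ^ (p - 2) * s) * t := by gcongr
    _ = s ^ p + t ^ p + 2 * (p - 1) * (s + t) ^ (p - 2) * (s * t) := by
        rw [hsucc hs, hsucc ht]; ring

lemma exists_subseq_tendsto_inner {𝕜 E : Type*} [RCLike 𝕜] [NormedAddCommGroup E]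
    [InnerProductSpace 𝕜 E] [CompleteSpace E] [TopologicalSpace.SeparableSpace E] {f : ℕ → E}
    {R : ℝ} (hf : ∀ n, ‖f n‖ ≤ R) :
    ∃ φ : ℕ → ℕ, StrictMono φ ∧ ∃ g : E, ∀ h : E,
      Tendsto (fun n => inner 𝕜 (f (φ n)) h) atTop (𝓝 (inner 𝕜 g h)) := by
  let L (n : ℕ) : WeakDual 𝕜 E := StrongDual.toWeakDual (InnerProductSpace.toDual 𝕜 E (f n))
  have hL (n : ℕ) : L n ∈ WeakDual.toStrongDual ⁻¹' Metric.closedBall (0 : StrongDual 𝕜 E) R :=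
    mem_closedBall_zero_iff.2 (((InnerProductSpace.toDual 𝕜 E).norm_map (f n)).trans_le (hf n))
  obtain ⟨ℓ, -, φ, hφ, hlim⟩ := WeakDual.isSeqCompact_closedBall 𝕜 E 0 R hL
  obtain ⟨g, hg⟩ := (InnerProductSpace.toDual 𝕜 E).surjective (WeakDual.toStrongDual ℓ)
  have hgℓ (h : E) : inner 𝕜 g h = ℓ h := by
    rw [← InnerProductSpace.toDual_apply_apply, hg]; rfl
  refine ⟨φ, hφ, g, fun h => ?_⟩
  rw [hgℓ]
  exact ((WeakDual.eval_continuous h).tendsto ℓ).comp hlim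

end General

section L2

variable {α ι : Type*} [MeasurableSpace α] {μ : Measure α} {l : Filter ι}

/-- Weak convergence in `L²(μ)`, for functions rather than classes in `Lp ℝ 2 μ`. Membership of
`f i` and `g` in `L²` is assumed separately where it is needed. -/
def TendstoWeakL2 (μ : Measure α) (f : ι → α → ℝ) (l : Filter ι) (g : α → ℝ) : Prop :=
  ∀ h : α → ℝ, MemLp h 2 μ →
    Tendsto (fun i => ∫ x, f i x * h x ∂μ) l (𝓝 (∫ x, g x * h x ∂μ))

lemma sq_integral_le_measureReal_univ_mul [IsFiniteMeasure μ] {f : α → ℝ} (hf : MemLp f 2 μ) :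
    (∫ x, f x ∂μ) ^ 2 ≤ μ.real univ * ∫ x, f x ^ 2 ∂μ := by
  have hf₁ : Integrable f μ := hf.integrable (by norm_num)
  have hquad (t : ℝ) :
      0 ≤ μ.real univ * (t * t) + (-2 * ∫ x, f x ∂μ) * t + ∫ x, f x ^ 2 ∂μ := by
    have hlin : Integrable (fun x => t * t - 2 * t * f x) μ :=
      (integrable_const _).sub (hf₁.const_mul _)
    calc 0 ≤ ∫ x, (t - f x) ^ 2 ∂μ := integral_nonneg fun x => sq_nonneg _
      _ = ∫ x, (t * t - 2 * t * f x + f x ^ 2) ∂μ := by congr 1 with x; ring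
      _ = μ.real univ * (t * t) + (-2 * ∫ x, f x ∂μ) * t + ∫ x, f x ^ 2 ∂μ := by
          rw [integral_add hlin hf.integrable_sq,
            integral_sub (integrable_const _) (hf₁.const_mul _), integral_const,
            integral_const_mul, smul_eq_mul]
          ring
  have := discrim_le_zero hquad
  rw [discrim] at this
  linarith

lemma integral_mul_eq_inner_toLp {f g : α → ℝ} (hf : MemLp f 2 μ) (hg : MemLp g 2 μ) :
    ∫ x, f x * g x ∂μ = inner ℝ (hf.toLp : Lp ℝ 2 μ) hg.toLp := by
  rw [L2.inner_def]
  refine integral_congr_ae ?_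
  filter_upwards [hf.coeFn_toLp, hg.coeFn_toLp] with x hfx hgx
  rw [hfx, hgx, real_inner_comm, RCLike.inner_apply, conj_trivial]

lemma exists_subseq_tendstoWeakL2 [TopologicalSpace.SeparableSpace (Lp ℝ 2 μ)] {f : ℕ → α → ℝ}
    (hf : ∀ n, MemLp (f n) 2 μ) {B : ℝ} (hB : ∀ n, ∫ x, f n x ^ 2 ∂μ ≤ B) :
    ∃ φ : ℕ → ℕ, StrictMono φ ∧ ∃ g, MemLp g 2 μ ∧ TendstoWeakL2 μ (f ∘ φ) atTop g := by
  have hnorm (n : ℕ) : ‖((hf n).toLp : Lp ℝ 2 μ)‖ ≤ √B := by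
    refine le_sqrt_of_sq_le ?_
    rw [← real_inner_self_eq_norm_sq, ← integral_mul_eq_inner_toLp]
    simpa only [sq] using hB n
  obtain ⟨φ, hφ, g, hg⟩ := exists_subseq_tendsto_inner (𝕜 := ℝ) hnorm
  refine ⟨φ, hφ, g, Lp.memLp g, fun h hh => ?_⟩
  rw [integral_mul_eq_inner_toLp (Lp.memLp g) hh, Lp.toLp_coeFn]
  simpa only [Function.comp_apply, integral_mul_eq_inner_toLp (hf _) hh] using hg hh.toLp

lemma abs_mul_abs_le_abs_mul_min_add {k : ℝ} (hk : 0 < k) (x y : ℝ) :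
    |x| * |y| ≤ |x| * min |y| (k * |x|) + k⁻¹ * y ^ 2 := by
  rcases le_total |y| (k * |x|) with hle | hle
  · rw [min_eq_left hle, le_add_iff_nonneg_right]
    positivity
  · calc |x| * |y| = k⁻¹ * (k * |x|) * |y| := by field_simp
      _ ≤ k⁻¹ * |y| * |y| := by gcongr
      _ = k⁻¹ * y ^ 2 := by rw [← sq_abs y]; ring
      _ ≤ |x| * min |y| (k * |x|) + k⁻¹ * y ^ 2 := le_add_of_nonneg_left (by positivity)

section AbsMulMin

variable {h : α → ℝ} {w : ι → α → ℝ} {k : ℝ}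

lemma norm_abs_mul_min_le (hk : 0 ≤ k) (x y : ℝ) : ‖|x| * min |y| (k * |x|)‖ ≤ k * x ^ 2 := by
  rw [norm_of_nonneg (by positivity), ← sq_abs x]
  calc |x| * min |y| (k * |x|) ≤ |x| * (k * |x|) :=
        mul_le_mul_of_nonneg_left (min_le_right _ _) (abs_nonneg _)
    _ = k * |x| ^ 2 := by ring

lemma aestronglyMeasurable_abs_mul_min {f : α → ℝ} (hh : AEStronglyMeasurable h μ)
    (hf : AEStronglyMeasurable f μ) (k : ℝ) :
    AEStronglyMeasurable (fun x => |h x| * min |f x| (k * |h x|)) μ :=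
  hh.norm.mul (hf.norm.inf (hh.norm.const_mul k))

lemma integrable_abs_mul_min {f : α → ℝ} (hk : 0 ≤ k) (hh : MemLp h 2 μ)
    (hf : AEStronglyMeasurable f μ) : Integrable (fun x => |h x| * min |f x| (k * |h x|)) μ :=
  (hh.integrable_sq.const_mul k).mono' (aestronglyMeasurable_abs_mul_min hh.1 hf k)
    (ae_of_all _ fun _ => norm_abs_mul_min_le hk _ _)

lemma tendsto_integral_abs_mul_min_zero [l.IsCountablyGenerated] (hk : 0 ≤ k)
    (hh : MemLp h 2 μ) (hw : ∀ i, AEStronglyMeasurable (w i) μ)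
    (hlim : ∀ᵐ x ∂μ, Tendsto (fun i => w i x) l (𝓝 0)) :
    Tendsto (fun i => ∫ x, |h x| * min |w i x| (k * |h x|) ∂μ) l (𝓝 0) := by
  rw [← integral_zero α ℝ (μ := μ)]
  refine tendsto_integral_filter_of_dominated_convergence _
    (.of_forall fun i => aestronglyMeasurable_abs_mul_min hh.1 (hw i) k)
    (.of_forall fun i => ae_of_all _ fun _ => norm_abs_mul_min_le hk _ _)
    (hh.integrable_sq.const_mul k) ?_
  filter_upwards [hlim] with x hx
  simpa [min_eq_left (mul_nonneg hk (abs_nonneg (h x)))] using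
    (hx.abs.min (tendsto_const_nhds (x := k * |h x|))).const_mul |h x|

-- The part of `|h w|` where `|w| > k |h|` is at most `w ^ 2 / k`; the rest is dominated by
-- `k h ^ 2`.
lemma tendsto_integral_abs_mul_abs_zero [l.IsCountablyGenerated] (hh : MemLp h 2 μ)
    (hw : ∀ i, MemLp (w i) 2 μ) {B : ℝ} (hB : ∀ i, ∫ x, w i x ^ 2 ∂μ ≤ B)
    (hlim : ∀ᵐ x ∂μ, Tendsto (fun i => w i x) l (𝓝 0)) :
    Tendsto (fun i => ∫ x, |h x| * |w i x| ∂μ) l (𝓝 0) := by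
  refine tendsto_order.2 ⟨fun ε hε => .of_forall fun i =>
    hε.trans_le (integral_nonneg fun x => by positivity), fun ε hε => ?_⟩
  obtain ⟨k, hk, hkε⟩ : ∃ k > 0, k⁻¹ * (|B| + 1) = ε / 2 :=
    ⟨2 * (|B| + 1) / ε, by positivity, by field_simp⟩
  filter_upwards [(tendsto_integral_abs_mul_min_zero hk.le hh (fun i => (hw i).1)
    hlim).eventually_lt_const (half_pos hε)] with i hi
  have hmin := integrable_abs_mul_min hk.le hh (hw i).1
  have hsq := (hw i).integrable_sq.const_mul k⁻¹
  calc ∫ x, |h x| * |w i x| ∂μ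
      ≤ ∫ x, (|h x| * min |w i x| (k * |h x|) + k⁻¹ * w i x ^ 2) ∂μ :=
        integral_mono_of_nonneg (ae_of_all _ fun x => by positivity) (hmin.add hsq)
          (ae_of_all _ fun x => abs_mul_abs_le_abs_mul_min_add hk _ _)
    _ = (∫ x, |h x| * min |w i x| (k * |h x|) ∂μ) + k⁻¹ * ∫ x, w i x ^ 2 ∂μ := by
        rw [integral_add hmin hsq, integral_const_mul]
    _ < ε / 2 + k⁻¹ * (|B| + 1) := by
        have : ∫ x, w i x ^ 2 ∂μ ≤ |B| + 1 := (hB i).trans (by linarith [le_abs_self B])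
        exact add_lt_add_of_lt_of_le hi (by gcongr)
    _ = ε := by rw [hkε, add_halves]

end AbsMulMin

lemma integral_sq_sub_le {f g : α → ℝ} (hf : MemLp f 2 μ) (hg : MemLp g 2 μ) :
    ∫ x, (f x - g x) ^ 2 ∂μ ≤ 2 * (∫ x, f x ^ 2 ∂μ) + 2 * ∫ x, g x ^ 2 ∂μ := by
  rw [← integral_const_mul, ← integral_const_mul, ← integral_add
    (hf.integrable_sq.const_mul 2) (hg.integrable_sq.const_mul 2)]
  refine integral_mono (hf.sub hg).integrable_sq
    ((hf.integrable_sq.const_mul 2).add (hg.integrable_sq.const_mul 2)) fun x => ?_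
  dsimp only [Pi.sub_apply, Pi.add_apply]
  nlinarith [sq_nonneg (f x + g x)]

lemma tendsto_integral_abs_mul_abs_sub_zero [l.IsCountablyGenerated] {f : ι → α → ℝ}
    {g h : α → ℝ} (hf : ∀ i, MemLp (f i) 2 μ) (hg : MemLp g 2 μ) (hh : MemLp h 2 μ) {B : ℝ}
    (hB : ∀ i, ∫ x, f i x ^ 2 ∂μ ≤ B) (hlim : ∀ᵐ x ∂μ, Tendsto (fun i => f i x) l (𝓝 (g x))) :
    Tendsto (fun i => ∫ x, |h x| * |f i x - g x| ∂μ) l (𝓝 0) := by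
  refine tendsto_integral_abs_mul_abs_zero hh (fun i => (hf i).sub hg)
    (B := 2 * B + 2 * ∫ x, g x ^ 2 ∂μ)
    (fun i => (integral_sq_sub_le (hf i) hg).trans (by gcongr; exact hB i)) ?_
  filter_upwards [hlim] with x hx
  simpa using hx.sub_const (g x)

lemma tendstoWeakL2_of_ae_tendsto [l.IsCountablyGenerated] {f : ι → α → ℝ} {g : α → ℝ}
    (hf : ∀ i, MemLp (f i) 2 μ) (hg : MemLp g 2 μ) {B : ℝ} (hB : ∀ i, ∫ x, f i x ^ 2 ∂μ ≤ B)
    (hlim : ∀ᵐ x ∂μ, Tendsto (fun i => f i x) l (𝓝 (g x))) : TendstoWeakL2 μ f l g := by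
  intro h hh
  refine tendsto_iff_norm_sub_tendsto_zero.2 (squeeze_zero (fun i => norm_nonneg _) (fun i => ?_)
    (tendsto_integral_abs_mul_abs_sub_zero hf hg hh hB hlim))
  have hfh : Integrable (fun x => f i x * h x) μ := (hf i).integrable_mul hh
  have hgh : Integrable (fun x => g x * h x) μ := hg.integrable_mul hh
  rw [← integral_sub hfh hgh]
  refine (norm_integral_le_integral_norm _).trans_eq (integral_congr_ae (ae_of_all _ fun x => ?_))
  dsimp only
  rw [← sub_mul, norm_mul, mul_comm, norm_eq_abs, norm_eq_abs]

lemma TendstoWeakL2.tendsto_integral_sq_sub_sub {f : ι → α → ℝ} {g : α → ℝ}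
    (hfg : TendstoWeakL2 μ f l g) (hf : ∀ i, MemLp (f i) 2 μ) (hg : MemLp g 2 μ) :
    Tendsto (fun i => (∫ x, f i x ^ 2 ∂μ) - ∫ x, (f i x - g x) ^ 2 ∂μ) l
      (𝓝 (∫ x, g x ^ 2 ∂μ)) := by
  have heq (i : ι) : (∫ x, f i x ^ 2 ∂μ) - ∫ x, (f i x - g x) ^ 2 ∂μ =
      2 * (∫ x, f i x * g x ∂μ) - ∫ x, g x ^ 2 ∂μ := by
    have hsub : Integrable (fun x => (f i x - g x) ^ 2) μ := ((hf i).sub hg).integrable_sq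
    have hmul : Integrable (fun x => f i x * g x) μ := (hf i).integrable_mul hg
    rw [← integral_const_mul, ← integral_sub (hf i).integrable_sq hsub,
      ← integral_sub (hmul.const_mul 2) hg.integrable_sq]
    congr 1 with x
    ring
  have hlim := ((hfg g hg).const_mul 2).sub_const (∫ x, g x ^ 2 ∂μ)
  simp only [← sq] at hlim
  rw [two_mul, add_sub_cancel_right] at hlim
  exact hlim.congr fun i => (heq i).symm

lemma TendstoWeakL2.comp {κ : Type*} {k : Filter κ} {f : ι → α → ℝ} {g : α → ℝ} {φ : κ → ι}
    (hfg : TendstoWeakL2 μ f l g) (hφ : Tendsto φ k l) : TendstoWeakL2 μ (f ∘ φ) k g :=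
  fun h hh => (hfg h hh).comp hφ

lemma TendstoWeakL2.tendsto_setIntegral {f : ι → α → ℝ} {g : α → ℝ}
    (hfg : TendstoWeakL2 μ f l g) {s : Set α} (hs : MeasurableSet s) (hμs : μ s ≠ ⊤) :
    Tendsto (fun i => ∫ x in s, f i x ∂μ) l (𝓝 (∫ x in s, g x ∂μ)) := by
  have heq (k : α → ℝ) : ∫ x, k x * s.indicator (fun _ => (1 : ℝ)) x ∂μ = ∫ x in s, k x ∂μ := by
    rw [← integral_indicator hs]
    congr 1 with x
    by_cases hx : x ∈ s <;> simp [hx]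
  simpa only [heq] using hfg _ (memLp_indicator_const 2 hs (1 : ℝ) (Or.inr hμs))

lemma TendstoWeakL2.tendsto_intervalIntegral {f : ι → ℝ → ℝ} {g : ℝ → ℝ}
    (hfg : TendstoWeakL2 volume f l g) (a b : ℝ) :
    Tendsto (fun i => ∫ x in a..b, f i x) l (𝓝 (∫ x in a..b, g x)) :=
  (hfg.tendsto_setIntegral measurableSet_Ioc measure_Ioc_lt_top.ne).sub
    (hfg.tendsto_setIntegral measurableSet_Ioc measure_Ioc_lt_top.ne)

lemma memLp_two_of_ae_tendsto {f : ℕ → α → ℝ} {g : α → ℝ} (hf : ∀ n, MemLp (f n) 2 μ) {B : ℝ}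
    (hB : ∀ n, ∫ x, f n x ^ 2 ∂μ ≤ B)
    (hlim : ∀ᵐ x ∂μ, Tendsto (fun n => f n x) atTop (𝓝 (g x))) : MemLp g 2 μ := by
  have hbound (n : ℕ) : eLpNorm (f n) 2 μ ≤ ENNReal.ofReal √B := by
    rw [(hf n).eLpNorm_eq_integral_rpow_norm two_ne_zero ENNReal.ofNat_ne_top]
    refine ENNReal.ofReal_le_ofReal ?_
    simpa [sqrt_eq_rpow] using sqrt_le_sqrt (hB n)
  refine ⟨aestronglyMeasurable_of_tendsto_ae atTop (fun n => (hf n).1) hlim, ?_⟩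
  calc eLpNorm g 2 μ ≤ liminf (fun n => eLpNorm (f n) 2 μ) atTop :=
        Lp.eLpNorm_lim_le_liminf_eLpNorm (fun n => (hf n).1) g hlim
    _ ≤ liminf (fun _ : ℕ => ENNReal.ofReal √B) atTop := liminf_le_liminf (.of_forall hbound)
    _ < ⊤ := by rw [liminf_const]; exact ENNReal.ofReal_lt_top

lemma abs_rpow_le_rpow_sub_two_mul_sq {p M x : ℝ} (hp : 2 ≤ p) (hx : |x| ≤ M) :
    |x| ^ p ≤ M ^ (p - 2) * x ^ 2 := by
  calc |x| ^ p = |x| ^ (p - 2) * x ^ 2 := by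
        rw [← sq_abs x, ← rpow_natCast,
          ← rpow_add_of_nonneg (abs_nonneg x) (by linarith) (by norm_num)]
        norm_num
    _ ≤ M ^ (p - 2) * x ^ 2 := by
        gcongr

variable {f g : α → ℝ} {p M : ℝ}

lemma integrable_abs_rpow_of_abs_le (hp : 2 ≤ p) (hf : MemLp f 2 μ)
    (hM : ∀ᵐ x ∂μ, |f x| ≤ M) : Integrable (fun x => |f x| ^ p) μ := by
  refine (hf.integrable_sq.const_mul (M ^ (p - 2))).mono'
    (hf.1.norm.aemeasurable.pow_const p).aestronglyMeasurable ?_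
  filter_upwards [hM] with x hx
  rw [norm_of_nonneg (by positivity)]
  exact abs_rpow_le_rpow_sub_two_mul_sq hp hx

lemma integral_abs_rpow_le_of_abs_le (hp : 2 ≤ p) (hf : MemLp f 2 μ)
    (hM : ∀ᵐ x ∂μ, |f x| ≤ M) : ∫ x, |f x| ^ p ∂μ ≤ M ^ (p - 2) * ∫ x, f x ^ 2 ∂μ := by
  rw [← integral_const_mul]
  refine integral_mono_ae (integrable_abs_rpow_of_abs_le hp hf hM)
    (hf.integrable_sq.const_mul _) ?_
  filter_upwards [hM] with x hx using abs_rpow_le_rpow_sub_two_mul_sq hp hx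

lemma integral_abs_add_rpow_le (hp : 2 ≤ p) (hf : MemLp f 2 μ) (hg : MemLp g 2 μ)
    (hfM : ∀ᵐ x ∂μ, |f x| ≤ M) (hgM : ∀ᵐ x ∂μ, |g x| ≤ M) :
    ∫ x, |f x + g x| ^ p ∂μ ≤ (∫ x, |f x| ^ p ∂μ) + (∫ x, |g x| ^ p ∂μ) +
      2 * (p - 1) * (2 * M) ^ (p - 2) * ∫ x, |f x| * |g x| ∂μ := by
  have hfgM : ∀ᵐ x ∂μ, |f x| + |g x| ≤ 2 * M := by
    filter_upwards [hfM, hgM] with x hfx hgx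
    linarith
  have hf_int := integrable_abs_rpow_of_abs_le hp hf hfM
  have hg_int := integrable_abs_rpow_of_abs_le hp hg hgM
  have hfg_int : Integrable (fun x => |f x| ^ p + |g x| ^ p) μ := hf_int.add hg_int
  have hmul_int : Integrable (fun x => |f x| * |g x|) μ := hf.norm.integrable_mul hg.norm
  have hadd_int := integrable_abs_rpow_of_abs_le hp (hf.add hg)
    (hfgM.mono fun x => (abs_add_le (f x) (g x)).trans)
  rw [← integral_const_mul, ← integral_add hf_int hg_int,
    ← integral_add hfg_int (hmul_int.const_mul _)]
  refine integral_mono_ae hadd_int (hfg_int.add (hmul_int.const_mul _)) ?_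
  filter_upwards [hfgM] with x hx
  have hC : 0 ≤ 2 * (p - 1) := by linarith
  calc |f x + g x| ^ p ≤ (|f x| + |g x|) ^ p := by gcongr; exact abs_add_le _ _
    _ ≤ |f x| ^ p + |g x| ^ p + 2 * (p - 1) * (|f x| + |g x|) ^ (p - 2) * (|f x| * |g x|) :=
        add_rpow_le_rpow_add_rpow_add_mul hp (abs_nonneg _) (abs_nonneg _)
    _ ≤ |f x| ^ p + |g x| ^ p + 2 * (p - 1) * (2 * M) ^ (p - 2) * (|f x| * |g x|) := by
        gcongr

end L2

lemma mass_nonneg (u : ℝ → ℝ) : 0 ≤ mass u := integral_nonneg fun _ => sq_nonneg _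

lemma mass_const_mul (u : ℝ → ℝ) (t : ℝ) : mass (fun x => t * u x) = t ^ 2 * mass u := by
  simp only [mass, mul_pow, integral_const_mul]

lemma mass_comp_add_right (u : ℝ → ℝ) (y : ℝ) : mass (fun x => u (x + y)) = mass u :=
  integral_add_right_eq_self (fun x => u x ^ 2) y

/-- `u ∈ H¹(ℝ)` with weak derivative `u'`, where `u'` is required to be measurable. In `IsH1`
only `u' ^ 2` is measurable, and an interval integral of a non-integrable `u'` is `0`; for `u ≠ 0`
the two notions agree, see `IsH1.memH1`. -/
structure MemH1 (u u' : ℝ → ℝ) : Prop where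
  continuous : Continuous u
  memLp : MemLp u 2
  memLp_deriv : MemLp u' 2
  sub_eq_integral : ∀ a b, u b - u a = ∫ t in a..b, u' t

lemma intervalIntegrable_of_memLp_two {f : ℝ → ℝ} (hf : MemLp f 2) (a b : ℝ) :
    IntervalIntegrable f volume a b :=
  ((hf.locallyIntegrable (by norm_num)).integrableOn_isCompact isCompact_uIcc).intervalIntegrable

namespace IsH1

variable {u u' : ℝ → ℝ}

lemma eq_const_of_not_locallyIntegrable (h : IsH1 u u') (hu' : ¬LocallyIntegrable u') :
    ∃ c, u = fun _ => c := by
  obtain ⟨x, hx⟩ : ∃ x, ¬IntegrableAtFilter u' (𝓝 x) volume := not_forall.1 hu'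
  have heq {a b : ℝ} (ha : a < x) (hb : x < b) : u b = u a := by
    have hab : a ≤ b := (ha.trans hb).le
    rw [← sub_eq_zero, h.2.2.2 a b hab, intervalIntegral.integral_undef]
    rw [intervalIntegrable_iff_integrableOn_Ioc_of_le hab]
    exact fun hint => hx ⟨Ioc a b, Ioc_mem_nhds ha hb, hint⟩
  refine ⟨u (x - 1), h.1.ext_on (dense_compl_singleton x) continuous_const fun y hy => ?_⟩
  rcases lt_or_gt_of_ne hy with hyx | hyx
  · exact (heq hyx (lt_add_one x)).symm.trans (heq (sub_one_lt x) (lt_add_one x))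
  · exact heq (sub_one_lt x) hyx

lemma locallyIntegrable (h : IsH1 u u') (hm : mass u ≠ 0) : LocallyIntegrable u' := by
  by_contra hu'
  obtain ⟨c, rfl⟩ := h.eq_const_of_not_locallyIntegrable hu'
  have hc : c ^ 2 = 0 := by
    simpa [integrable_const_iff, isFiniteMeasure_iff] using h.2.1
  exact hm (by simp [mass, hc])

lemma memH1 (h : IsH1 u u') (hm : mass u ≠ 0) : MemH1 u u' where
  continuous := h.1
  memLp := (memLp_two_iff_integrable_sq h.1.aestronglyMeasurable).2 h.2.1
  memLp_deriv :=
    (memLp_two_iff_integrable_sq (h.locallyIntegrable hm).aestronglyMeasurable).2 h.2.2.1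
  sub_eq_integral a b := by
    rcases le_total a b with hab | hab
    · exact h.2.2.2 a b hab
    · rw [intervalIntegral.integral_symm, ← h.2.2.2 b a hab, neg_sub]

end IsH1

namespace MemH1

variable {u u' v v' : ℝ → ℝ}

lemma isH1 (h : MemH1 u u') : IsH1 u u' :=
  ⟨h.continuous, h.memLp.integrable_sq, h.memLp_deriv.integrable_sq,
    fun a b _ => h.sub_eq_integral a b⟩

lemma sub (hu : MemH1 u u') (hv : MemH1 v v') :
    MemH1 (fun x => u x - v x) (fun x => u' x - v' x) where
  continuous := hu.continuous.sub hv.continuous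
  memLp := hu.memLp.sub hv.memLp
  memLp_deriv := hu.memLp_deriv.sub hv.memLp_deriv
  sub_eq_integral a b := by
    rw [intervalIntegral.integral_sub (intervalIntegrable_of_memLp_two hu.memLp_deriv a b)
      (intervalIntegrable_of_memLp_two hv.memLp_deriv a b), ← hu.sub_eq_integral,
      ← hv.sub_eq_integral]
    ring

lemma const_mul (h : MemH1 u u') (t : ℝ) : MemH1 (fun x => t * u x) (fun x => t * u' x) where
  continuous := h.continuous.const_mul t
  memLp := h.memLp.const_mul t
  memLp_deriv := h.memLp_deriv.const_mul t
  sub_eq_integral a b := by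
    rw [intervalIntegral.integral_const_mul, ← h.sub_eq_integral, mul_sub]

lemma comp_add_right (h : MemH1 u u') (y : ℝ) :
    MemH1 (fun x => u (x + y)) (fun x => u' (x + y)) where
  continuous := h.continuous.comp (continuous_add_const y)
  memLp := h.memLp.comp_measurePreserving (measurePreserving_add_right volume y)
  memLp_deriv := h.memLp_deriv.comp_measurePreserving (measurePreserving_add_right volume y)
  sub_eq_integral a b := by
    rw [intervalIntegral.integral_comp_add_right, ← h.sub_eq_integral]

lemma of_primitive (c : ℝ) (hu : ∀ x, u x = c + ∫ t in (0 : ℝ)..x, u' t) (hu₂ : MemLp u 2)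
    (hu' : MemLp u' 2) : MemH1 u u' where
  continuous := (continuous_const.add (intervalIntegral.continuous_primitive
    (intervalIntegrable_of_memLp_two hu') 0)).congr fun x => (hu x).symm
  memLp := hu₂
  memLp_deriv := hu'
  sub_eq_integral a b := by
    rw [hu, hu, add_sub_add_left_eq_sub, intervalIntegral.integral_interval_sub_left] <;>
      exact intervalIntegrable_of_memLp_two hu' _ _

lemma sq_sub_le (h : MemH1 u u') {a b : ℝ} (hab : a ≤ b) :
    (u b - u a) ^ 2 ≤ (b - a) * mass u' := by
  rw [h.sub_eq_integral, intervalIntegral.integral_of_le hab]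
  calc (∫ t in Ioc a b, u' t) ^ 2 ≤ (b - a) * ∫ t in Ioc a b, u' t ^ 2 := by
        simpa [hab] using sq_integral_le_measureReal_univ_mul (h.memLp_deriv.restrict (Ioc a b))
    _ ≤ (b - a) * mass u' := mul_le_mul_of_nonneg_left
        (setIntegral_le_integral h.memLp_deriv.integrable_sq (ae_of_all _ fun _ => sq_nonneg _))
        (sub_nonneg.2 hab)

lemma mul_sq_le (h : MemH1 u u') (x : ℝ) {d : ℝ} (hd : 0 ≤ d) :
    d * u x ^ 2 ≤ 2 * mass u + 2 * mass u' * (d * d) := by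
  have hpoint : ∀ y ∈ Ioc x (x + d), u x ^ 2 ≤ 2 * u y ^ 2 + 2 * d * mass u' := by
    intro y hy
    have hosc : (u y - u x) ^ 2 ≤ d * mass u' := (h.sq_sub_le hy.1.le).trans
      (mul_le_mul_of_nonneg_right (by linarith [hy.2]) (mass_nonneg u'))
    nlinarith [sq_nonneg (2 * u y - u x)]
  have hsq : IntegrableOn (fun y => 2 * u y ^ 2) (Ioc x (x + d)) :=
    (h.memLp.integrable_sq.const_mul 2).integrableOn
  have hconst (c : ℝ) : IntegrableOn (fun _ => c) (Ioc x (x + d)) := integrableOn_const (by simp)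
  calc d * u x ^ 2 = ∫ _ in Ioc x (x + d), u x ^ 2 := by simp [hd]
    _ ≤ ∫ y in Ioc x (x + d), (2 * u y ^ 2 + 2 * d * mass u') :=
        setIntegral_mono_on (hconst _) (hsq.add (hconst _)) measurableSet_Ioc hpoint
    _ = 2 * (∫ y in Ioc x (x + d), u y ^ 2) + 2 * mass u' * (d * d) := by
        rw [integral_add hsq (hconst _), integral_const_mul, setIntegral_const]
        simp only [volume_real_Ioc_of_le (le_add_of_nonneg_right hd), smul_eq_mul]
        ring
    _ ≤ 2 * mass u + 2 * mass u' * (d * d) := by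
        gcongr
        exact setIntegral_le_integral h.memLp.integrable_sq (ae_of_all _ fun _ => sq_nonneg _)

-- Optimizing `mul_sq_le` over `d` amounts to a discriminant condition.
lemma pow_four_le (h : MemH1 u u') (x : ℝ) : u x ^ 4 ≤ 16 * mass u' * mass u := by
  have hquad (d : ℝ) : 0 ≤ 2 * mass u' * (d * d) + -u x ^ 2 * d + 2 * mass u := by
    have hm := mass_nonneg u
    have hm' := mass_nonneg u'
    rcases le_total 0 d with hd | hd
    · linarith [h.mul_sq_le x hd]
    · have := mul_nonneg_of_nonpos_of_nonpos (neg_nonpos.2 (sq_nonneg (u x))) hd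
      linarith [mul_nonneg hm' (mul_self_nonneg d)]
  have hdiscrim := discrim_le_zero hquad
  rw [discrim] at hdiscrim
  linarith [show (-u x ^ 2) ^ 2 = u x ^ 4 by ring]

lemma abs_le_rpow (h : MemH1 u u') {m K : ℝ} (hm : mass u ≤ m) (hK : mass u' ≤ K) (x : ℝ) :
    |u x| ≤ (16 * K * m) ^ (1 / 4 : ℝ) := by
  have hm₀ : 0 ≤ m := (mass_nonneg u).trans hm
  have hK₀ : 0 ≤ K := (mass_nonneg u').trans hK
  rw [one_div, le_rpow_inv_iff_of_pos (abs_nonneg _) (by positivity) (by norm_num)]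
  calc |u x| ^ (4 : ℝ) = u x ^ 4 := by
        rw [← Even.pow_abs (by decide : Even 4)]
        exact_mod_cast rpow_natCast |u x| 4
    _ ≤ 16 * mass u' * mass u := h.pow_four_le x
    _ ≤ 16 * K * m := by
        gcongr
        exact mass_nonneg u

lemma eq_zero_of_mass_eq_zero (h : MemH1 u u') (hm : mass u = 0) (x : ℝ) : u x = 0 := by
  have h₄ : u x ^ 4 ≤ 0 := by simpa [hm] using h.pow_four_le x
  exact pow_eq_zero_iff four_ne_zero |>.1 (h₄.antisymm (by positivity))

end MemH1

/-- Weak convergence in `H¹(ℝ)` of `(a i, a' i)` to `(u, u')`, in the form available in dimension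
one: pointwise convergence of the functions, weak `L²` convergence of the derivatives. -/
structure TendstoWeakH1 {ι : Type*} (a a' : ι → ℝ → ℝ) (l : Filter ι) (u u' : ℝ → ℝ) : Prop where
  tendsto : ∀ x, Tendsto (fun i => a i x) l (𝓝 (u x))
  tendstoWeakL2_deriv : TendstoWeakL2 volume a' l u'

lemma exists_subseq_tendstoWeakH1 {a a' : ℕ → ℝ → ℝ} (ha : ∀ n, MemH1 (a n) (a' n)) {m K : ℝ}
    (hm : ∀ n, mass (a n) ≤ m) (hK : ∀ n, mass (a' n) ≤ K) :
    ∃ φ : ℕ → ℕ, StrictMono φ ∧ ∃ u u', MemH1 u u' ∧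
      TendstoWeakH1 (a ∘ φ) (a' ∘ φ) atTop u u' := by
  have : Fact ((2 : ENNReal) ≠ ⊤) := ⟨ENNReal.ofNat_ne_top⟩
  obtain ⟨φ, hφ, u', hu', hweak⟩ := exists_subseq_tendstoWeakL2 (fun n => (ha n).memLp_deriv) hK
  obtain ⟨c, -, ψ, hψ, hc⟩ := isCompact_Icc.tendsto_subseq (x := fun n => a (φ n) 0)
    fun n => abs_le.1 ((ha _).abs_le_rpow (hm _) (hK _) 0)
  have hweak' : TendstoWeakL2 volume (a' ∘ (φ ∘ ψ)) atTop u' := hweak.comp hψ.tendsto_atTop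
  set u : ℝ → ℝ := fun x => c + ∫ t in (0 : ℝ)..x, u' t
  have hlim (x : ℝ) : Tendsto (fun n => a (φ (ψ n)) x) atTop (𝓝 (u x)) := by
    refine (hc.add (hweak'.tendsto_intervalIntegral 0 x)).congr fun n => ?_
    simp only [Function.comp_apply, ← (ha _).sub_eq_integral, add_sub_cancel]
  have hu : MemLp u 2 :=
    memLp_two_of_ae_tendsto (fun n => (ha _).memLp) (fun n => hm _) (ae_of_all _ hlim)
  exact ⟨φ ∘ ψ, hφ.comp hψ, u, u', .of_primitive c (fun _ => rfl) hu hu', hlim, hweak'⟩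

section Energy

variable {p q μ J : ℝ} {u u' v v' : ℝ → ℝ}

lemma MemH1.exists_translate_abs_le (hu : MemH1 u u') (p : ℝ) (hq : 0 ≤ q) :
    ∃ v v', MemH1 v v' ∧ mass v = mass u ∧ Ffun p q v v' ≤ Ffun p q u u' ∧
      ∀ x, |v x| ≤ 2 * |v 0| := by
  obtain ⟨y, hy, hmax⟩ := exists_le_and_forall_le_two_mul (f := fun x => |u x|)
    ⟨_, forall_mem_range.2 (hu.abs_le_rpow le_rfl le_rfl)⟩ (fun _ => abs_nonneg _) 0
  refine ⟨_, _, hu.comp_add_right y, mass_comp_add_right u y, ?_,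
    fun x => by simpa only [zero_add] using hmax (x + y)⟩
  rw [Ffun, Ffun, integral_add_right_eq_self (fun x => u' x ^ 2) y,
    integral_add_right_eq_self (fun x => |u x| ^ p) y, zero_add]
  gcongr

lemma MemH1.le_Ffun_of_abs_le (hu : MemH1 u u') {M : ℝ} (hp : 2 ≤ p) (hq : 0 ≤ q)
    (hM : ∀ x, |u x| ≤ M) :
    1 / 2 * mass u' - (1 / p * (M ^ (p - 2) * mass u) + 1 / q * M ^ q) ≤ Ffun p q u u' := by
  have hLp : ∫ x, |u x| ^ p ≤ M ^ (p - 2) * mass u :=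
    integral_abs_rpow_le_of_abs_le hp hu.memLp (ae_of_all _ hM)
  calc 1 / 2 * mass u' - (1 / p * (M ^ (p - 2) * mass u) + 1 / q * M ^ q)
      ≤ 1 / 2 * mass u' - (1 / p * (∫ x, |u x| ^ p) + 1 / q * |u 0| ^ q) := by
        gcongr
        exact hM 0
    _ = Ffun p q u u' := by
        rw [Ffun, mass]
        ring

lemma exists_mass_deriv_le_of_Ffun_le (hp : 2 ≤ p) (hp' : p < 6) (hq : 0 ≤ q) (hq' : q < 4)
    (hμ : 0 < μ) (B : ℝ) :
    ∃ K, ∀ u u', MemH1 u u' → mass u = μ → Ffun p q u u' ≤ B → mass u' ≤ K := by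
  have hcoercive : Tendsto (fun A : ℝ => 1 / (32 * μ) * A ^ (4 : ℝ) -
      (1 / p * μ * A ^ (p - 2) + 1 / q * A ^ q)) atTop atTop :=
    tendsto_mul_rpow_sub_add_atTop (by positivity) (by norm_num) (by linarith) hq'
  obtain ⟨A₀, hA₀⟩ := eventually_atTop.1 (hcoercive.eventually_gt_atTop B)
  refine ⟨A₀ ^ (4 : ℝ) / (16 * μ), fun u u' hu hm hB => ?_⟩
  have hlow := (hu.le_Ffun_of_abs_le hp hq (hu.abs_le_rpow le_rfl le_rfl)).trans hB
  rw [hm] at hlow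
  have hbase : 0 ≤ 16 * mass u' * μ := by have := mass_nonneg u'; positivity
  set A := (16 * mass u' * μ) ^ (1 / 4 : ℝ)
  have hA : A ^ (4 : ℝ) = 16 * mass u' * μ := by
    rw [← rpow_mul hbase]
    norm_num
  have hkin : 1 / 2 * mass u' = 1 / (32 * μ) * A ^ (4 : ℝ) := by
    rw [hA]
    field_simp
    ring
  have hAA₀ : A < A₀ := by
    by_contra! hge
    linarith [hA₀ A hge]
  rw [le_div_iff₀ (by positivity)]
  calc mass u' * (16 * μ) = A ^ (4 : ℝ) := by linarith
    _ ≤ A₀ ^ (4 : ℝ) := by gcongr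

lemma ne_zero_of_tendsto_Ffun_neg {ι : Type*} {l : Filter ι} [l.NeBot] {a a' : ι → ℝ → ℝ}
    {c : ℝ} (hp : 2 < p) (hq : 0 < q) (ha : ∀ i, MemH1 (a i) (a' i))
    (hm : ∀ i, mass (a i) = μ) (hmax : ∀ i x, |a i x| ≤ 2 * |a i 0|)
    (hF : Tendsto (fun i => Ffun p q (a i) (a' i)) l (𝓝 J)) (hJ : J < 0)
    (hc : Tendsto (fun i => a i 0) l (𝓝 c)) : c ≠ 0 := by
  rintro rfl
  have hsup : Tendsto (fun i => 2 * |a i 0|) l (𝓝 0) := by simpa using hc.abs.const_mul 2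
  have hpow {s : ℝ} (hs : 0 < s) : Tendsto (fun i => (2 * |a i 0|) ^ s) l (𝓝 0) := by
    simpa [zero_rpow hs.ne'] using hsup.rpow_const (p := s) (.inr hs.le)
  have hlow : Tendsto (fun i => -(1 / p * ((2 * |a i 0|) ^ (p - 2) * μ) +
      1 / q * (2 * |a i 0|) ^ q)) l (𝓝 0) := by
    simpa using ((((hpow (sub_pos.2 hp)).mul_const μ).const_mul (1 / p)).add
      ((hpow hq).const_mul (1 / q))).neg
  refine hJ.not_ge (le_of_tendsto_of_tendsto' hlow hF fun i => ?_)
  have := (ha i).le_Ffun_of_abs_le hp.le hq.le (hmax i)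
  rw [hm] at this
  linarith [mass_nonneg (a' i)]

namespace TendstoWeakH1

variable {ι : Type*} {l : Filter ι} [l.IsCountablyGenerated] {a a' : ι → ℝ → ℝ}

lemma tendsto_mass_sub (h : TendstoWeakH1 a a' l u u') (ha : ∀ i, MemH1 (a i) (a' i))
    (hu : MemH1 u u') (hm : ∀ i, mass (a i) = μ) :
    Tendsto (fun i => mass fun x => a i x - u x) l (𝓝 (μ - mass u)) := by
  have hweak : TendstoWeakL2 volume a l u :=
    tendstoWeakL2_of_ae_tendsto (fun i => (ha i).memLp) hu.memLp (fun i => (hm i).le)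
      (ae_of_all _ h.tendsto)
  refine ((hweak.tendsto_integral_sq_sub_sub (fun i => (ha i).memLp) hu.memLp).const_sub μ).congr
    fun i => ?_
  rw [← hm i, mass, mass, sub_sub_cancel]

lemma exists_tendsto_zero_Ffun_add_Ffun_sub_le (h : TendstoWeakH1 a a' l u u') [l.NeBot]
    (ha : ∀ i, MemH1 (a i) (a' i)) (hu : MemH1 u u') (hp : 2 ≤ p) (hq : 0 ≤ q) {m M : ℝ}
    (hm : ∀ i, mass (a i) ≤ m) (hM : ∀ i x, |a i x| ≤ M) :
    ∃ r : ι → ℝ, Tendsto r l (𝓝 0) ∧ ∀ i, Ffun p q u u' +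
      Ffun p q (fun x => a i x - u x) (fun x => a' i x - u' x) ≤ Ffun p q (a i) (a' i) + r i := by
  have huM (x : ℝ) : |u x| ≤ M := le_of_tendsto' (h.tendsto x).abs fun i => hM i x
  have hsubM (i : ι) (x : ℝ) : |a i x - u x| ≤ 2 * M := by
    linarith [abs_sub (a i x) (u x), hM i x, huM x]
  set C := 2 * (p - 1) * (2 * (2 * M)) ^ (p - 2)
  have hkin : Tendsto (fun i => (∫ x, u' x ^ 2) -
      ((∫ x, a' i x ^ 2) - ∫ x, (a' i x - u' x) ^ 2)) l (𝓝 0) := by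
    rw [← sub_self (∫ x, u' x ^ 2)]
    exact (h.tendstoWeakL2_deriv.tendsto_integral_sq_sub_sub (fun i => (ha i).memLp_deriv)
      hu.memLp_deriv).const_sub _
  have hcross : Tendsto (fun i => ∫ x, |u x| * |a i x - u x|) l (𝓝 0) :=
    tendsto_integral_abs_mul_abs_sub_zero (fun i => (ha i).memLp) hu.memLp hu.memLp hm
      (ae_of_all _ h.tendsto)
  have hpoint : Tendsto (fun i => |a i 0| ^ q - |u 0| ^ q) l (𝓝 0) := by
    simpa using ((h.tendsto 0).abs.rpow_const (p := q) (.inr hq)).sub_const (|u 0| ^ q)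
  have hlim := ((hkin.const_mul (1 / 2)).add
    ((hcross.const_mul C).const_mul (1 / p))).add (hpoint.const_mul (1 / q))
  simp only [mul_zero, add_zero] at hlim
  refine ⟨_, hlim, fun i => ?_⟩
  have hLp : ∫ x, |a i x| ^ p ≤ (∫ x, |u x| ^ p) + (∫ x, |a i x - u x| ^ p) +
      C * ∫ x, |u x| * |a i x - u x| := by
    simpa using integral_abs_add_rpow_le hp hu.memLp ((ha i).sub hu).memLp
      (ae_of_all _ fun x => by linarith [huM x, (abs_nonneg (u x)).trans (huM x)])
      (ae_of_all _ (hsubM i))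
  have hLp' := mul_le_mul_of_nonneg_left hLp (one_div_nonneg.2 (zero_le_two.trans hp))
  have hpoint' : 0 ≤ 1 / q * |a i 0 - u 0| ^ q := by positivity
  simp only [Ffun]
  linarith

end TendstoWeakH1

lemma Ffun_const_mul (p q : ℝ) (u u' : ℝ → ℝ) {t : ℝ} (ht : 0 ≤ t) :
    Ffun p q (fun x => t * u x) (fun x => t * u' x) = t ^ 2 * (1 / 2 * ∫ x, u' x ^ 2) -
      t ^ p * (1 / p * ∫ x, |u x| ^ p) - t ^ q * (1 / q * |u 0| ^ q) := by
  simp only [Ffun, abs_mul, abs_of_nonneg ht, mul_rpow ht (abs_nonneg _), mul_pow,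
    integral_const_mul]
  ring

lemma Ffun_const_mul_le (hp : 2 ≤ p) (hq : 2 ≤ q) (u u' : ℝ → ℝ) {t : ℝ} (ht : 1 ≤ t) :
    Ffun p q (fun x => t * u x) (fun x => t * u' x) ≤ t ^ 2 * Ffun p q u u' := by
  have hpow {s : ℝ} (hs : 2 ≤ s) : t ^ 2 ≤ t ^ s := by
    simpa using rpow_le_rpow_of_exponent_le ht hs
  have hLp : 0 ≤ 1 / p * ∫ x, |u x| ^ p := by positivity
  have hpoint : 0 ≤ 1 / q * |u 0| ^ q := by positivity
  rw [Ffun_const_mul p q u u' (zero_le_one.trans ht), Ffun]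
  linarith [mul_le_mul_of_nonneg_right (hpow hp) hLp, mul_le_mul_of_nonneg_right (hpow hq) hpoint]

lemma Ffun_const_mul_lt (hp : 2 ≤ p) (hq : 2 < q) (u' : ℝ → ℝ) (hu : u 0 ≠ 0) {t : ℝ}
    (ht : 1 < t) :
    Ffun p q (fun x => t * u x) (fun x => t * u' x) < t ^ 2 * Ffun p q u u' := by
  have hpow : t ^ 2 ≤ t ^ p := by simpa using rpow_le_rpow_of_exponent_le ht.le hp
  have hpow' : t ^ 2 < t ^ q := by simpa using rpow_lt_rpow_of_exponent_lt ht hq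
  have hLp : 0 ≤ 1 / p * ∫ x, |u x| ^ p := by positivity
  have hpoint : 0 < 1 / q * |u 0| ^ q := by positivity
  rw [Ffun_const_mul p q u u' (zero_le_one.trans ht.le), Ffun]
  linarith [mul_le_mul_of_nonneg_right hpow hLp, mul_lt_mul_of_pos_right hpow' hpoint]

/-- The values of `F_{p,q}` on the functions in `H¹(ℝ)` of mass `μ`, so that the constrained
infimum is the greatest lower bound of this set. -/
def energies (p q μ : ℝ) : Set ℝ :=
  {E | ∃ u u', MemH1 u u' ∧ mass u = μ ∧ Ffun p q u u' = E}

lemma MemH1.Ffun_const_mul_mem_energies (hv : MemH1 v v') (p q : ℝ) (hμ : 0 ≤ μ)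
    (hm : 0 < mass v) :
    Ffun p q (fun x => √(μ / mass v) * v x) (fun x => √(μ / mass v) * v' x) ∈
      energies p q μ := by
  refine ⟨_, _, hv.const_mul _, ?_, rfl⟩
  rw [mass_const_mul, sq_sqrt (by positivity), div_mul_cancel₀ _ hm.ne']

lemma MemH1.mass_div_mul_le_Ffun (hv : MemH1 v v') (hp : 2 ≤ p) (hq : 2 ≤ q) (hμ : 0 < μ)
    (hJ : J ∈ lowerBounds (energies p q μ)) (hvμ : mass v ≤ μ) :
    mass v / μ * J ≤ Ffun p q v v' := by
  rcases (mass_nonneg v).eq_or_lt with hm | hm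
  · have hzero := hv.eq_zero_of_mass_eq_zero hm.symm
    have hp₀ : p ≠ 0 := by linarith
    have hq₀ : q ≠ 0 := by linarith
    have hkin : 0 ≤ ∫ x, v' x ^ 2 := mass_nonneg v'
    simpa [Ffun, hzero, ← hm, hp₀, hq₀] using hkin
  · have ht : 1 ≤ √(μ / mass v) := one_le_sqrt.2 ((one_le_div hm).2 hvμ)
    have hscale := (hJ (hv.Ffun_const_mul_mem_energies p q hμ.le hm)).trans
      (Ffun_const_mul_le hp hq v v' ht)
    rw [sq_sqrt (by positivity)] at hscale
    calc mass v / μ * J ≤ mass v / μ * (μ / mass v * Ffun p q v v') := by gcongr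
      _ = Ffun p q v v' := by field_simp

lemma MemH1.mass_div_mul_lt_Ffun (hv : MemH1 v v') (hp : 2 ≤ p) (hq : 2 < q)
    (hJ : J ∈ lowerBounds (energies p q μ)) (hm : 0 < mass v) (hvμ : mass v < μ)
    (hv₀ : v 0 ≠ 0) : mass v / μ * J < Ffun p q v v' := by
  have hμ : 0 < μ := hm.trans hvμ
  have ht : 1 < √(μ / mass v) := by
    rw [lt_sqrt zero_le_one, one_pow, one_lt_div hm]
    exact hvμ
  have hscale := (hJ (hv.Ffun_const_mul_mem_energies p q hμ.le hm)).trans_lt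
    (Ffun_const_mul_lt hp hq v' hv₀ ht)
  rw [sq_sqrt (by positivity)] at hscale
  calc mass v / μ * J < mass v / μ * (μ / mass v * Ffun p q v v') := by gcongr
    _ = Ffun p q v v' := by field_simp

lemma exists_minimizing_seq (hq : 0 ≤ q) (hJ : IsGLB (energies p q μ) J) :
    ∃ a a' : ℕ → ℝ → ℝ, (∀ n, MemH1 (a n) (a' n)) ∧ (∀ n, mass (a n) = μ) ∧
      (∀ n x, |a n x| ≤ 2 * |a n 0|) ∧
      Tendsto (fun n => Ffun p q (a n) (a' n)) atTop (𝓝 J) := by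
  obtain ⟨E, -, -, hE, hmem⟩ := hJ.exists_seq_antitone_tendsto hJ.nonempty
  have hexists (n : ℕ) : ∃ v v', MemH1 v v' ∧ mass v = μ ∧ (∀ x, |v x| ≤ 2 * |v 0|) ∧
      Ffun p q v v' ≤ E n := by
    obtain ⟨u, u', hu, hm, hF⟩ := hmem n
    obtain ⟨v, v', hv, hvm, hvF, hmax⟩ := hu.exists_translate_abs_le p hq
    exact ⟨v, v', hv, hvm.trans hm, hmax, hvF.trans_eq hF⟩
  choose a a' ha hm hmax hF using hexists
  exact ⟨a, a', ha, hm, hmax, tendsto_of_tendsto_of_tendsto_of_le_of_le tendsto_const_nhds hE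
    (fun n => hJ.1 ⟨_, _, ha n, hm n, rfl⟩) hF⟩

lemma exists_minimizing_seq_tendstoWeakH1 (hp : 2 ≤ p) (hp' : p < 6) (hq : 0 ≤ q) (hq' : q < 4)
    (hμ : 0 < μ) (hJ : IsGLB (energies p q μ) J) :
    ∃ a a' : ℕ → ℝ → ℝ, ∃ u u', (∀ n, MemH1 (a n) (a' n)) ∧ MemH1 u u' ∧
      (∀ n, mass (a n) = μ) ∧ (∀ n x, |a n x| ≤ 2 * |a n 0|) ∧ (∃ M, ∀ n x, |a n x| ≤ M) ∧
      Tendsto (fun n => Ffun p q (a n) (a' n)) atTop (𝓝 J) ∧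
      TendstoWeakH1 a a' atTop u u' := by
  obtain ⟨a, a', ha, hm, hmax, hF⟩ := exists_minimizing_seq hq hJ
  obtain ⟨B, hB⟩ := hF.bddAbove_range
  obtain ⟨K, hK⟩ := exists_mass_deriv_le_of_Ffun_le hp hp' hq hq' hμ B
  have hK' (n : ℕ) : mass (a' n) ≤ K := hK _ _ (ha n) (hm n) (hB (mem_range_self n))
  obtain ⟨φ, hφ, u, u', hu, hweak⟩ := exists_subseq_tendstoWeakH1 ha (fun n => (hm n).le) hK'
  exact ⟨a ∘ φ, a' ∘ φ, u, u', fun n => ha _, hu, fun n => hm _, fun n => hmax _,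
    ⟨_, fun n => (ha _).abs_le_rpow (hm _).le (hK' _)⟩, hF.comp hφ.tendsto_atTop, hweak⟩

lemma TendstoWeakH1.Ffun_le_mass_div_mul {ι : Type*} {l : Filter ι} [l.NeBot]
    [l.IsCountablyGenerated] {a a' : ι → ℝ → ℝ} (h : TendstoWeakH1 a a' l u u')
    (ha : ∀ i, MemH1 (a i) (a' i)) (hu : MemH1 u u') (hp : 2 ≤ p) (hq : 2 ≤ q) (hμ : 0 < μ)
    (hm : ∀ i, mass (a i) = μ) {M : ℝ} (hM : ∀ i x, |a i x| ≤ M)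
    (hJ : J ∈ lowerBounds (energies p q μ))
    (hF : Tendsto (fun i => Ffun p q (a i) (a' i)) l (𝓝 J)) (hpos : 0 < mass u) :
    Ffun p q u u' ≤ mass u / μ * J := by
  obtain ⟨r, hr, hsplit⟩ := h.exists_tendsto_zero_Ffun_add_Ffun_sub_le ha hu hp
    (zero_le_two.trans hq) (fun i => (hm i).le) hM
  have hmass := h.tendsto_mass_sub ha hu hm
  have hbound : ∀ᶠ i in l, Ffun p q u u' + (mass fun x => a i x - u x) / μ * J ≤
      Ffun p q (a i) (a' i) + r i := by
    filter_upwards [hmass.eventually_lt_const (sub_lt_self μ hpos)] with i hi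
    exact (add_le_add_right (((ha i).sub hu).mass_div_mul_le_Ffun hp hq hμ hJ hi.le) _).trans
      (hsplit i)
  have hlim : Ffun p q u u' + (μ - mass u) / μ * J ≤ J + 0 :=
    le_of_tendsto_of_tendsto (((hmass.div_const μ).mul_const J).const_add _) (hF.add hr) hbound
  rw [sub_div, div_self hμ.ne'] at hlim
  linarith

theorem mem_energies_of_isGLB (hp : 2 < p) (hp' : p < 6) (hq : 2 < q) (hq' : q < 4) (hμ : 0 < μ)
    (hJ : IsGLB (energies p q μ) J) (hJ₀ : J < 0) : J ∈ energies p q μ := by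
  have hq₀ : 0 < q := two_pos.trans hq
  obtain ⟨a, a', u, u', ha, hu, hm, hmax, ⟨M, hM⟩, hF, hweak⟩ :=
    exists_minimizing_seq_tendstoWeakH1 hp.le hp' hq₀.le hq' hμ hJ
  have hu₀ : u 0 ≠ 0 := ne_zero_of_tendsto_Ffun_neg hp hq₀ ha hm hmax hF hJ₀ (hweak.tendsto 0)
  have hpos : 0 < mass u :=
    (mass_nonneg u).lt_of_ne' fun hzero => hu₀ (hu.eq_zero_of_mass_eq_zero hzero 0)
  have hle : mass u ≤ μ :=
    sub_nonneg.1 (ge_of_tendsto' (hweak.tendsto_mass_sub ha hu hm) fun _ => mass_nonneg _)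
  have hFu := hweak.Ffun_le_mass_div_mul ha hu hp.le hq.le hμ hm hM hJ.1 hF hpos
  obtain hlt | heq := hle.lt_or_eq
  · exact absurd (hu.mass_div_mul_lt_Ffun hp.le hq hJ.1 hpos hlt hu₀) hFu.not_gt
  · rw [heq, div_self hμ.ne', one_mul] at hFu
    exact ⟨u, u', hu, heq, hFu.antisymm (hJ.1 ⟨u, u', hu, heq, rfl⟩)⟩

end Energy

theorem stmt15 (p q μ : ℝ) (hp : 2 < p) (hp' : p < 6) (hq : 2 < q) (hq' : q < 4)
    (hμ : 0 < μ)
    (hbdd : ∃ C : ℝ, ∀ u u' : ℝ → ℝ, IsH1 u u' → mass u = μ → C ≤ Ffun p q u u')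
    (hneg : ∃ u₀ u₀' : ℝ → ℝ, IsH1 u₀ u₀' ∧ mass u₀ = μ ∧ Ffun p q u₀ u₀' < 0) :
    ∃ u u' : ℝ → ℝ, IsH1 u u' ∧ mass u = μ ∧
      ∀ v v' : ℝ → ℝ, IsH1 v v' → mass v = μ → Ffun p q u u' ≤ Ffun p q v v' := by
  have hmem {v v' : ℝ → ℝ} (hv : IsH1 v v') (hm : mass v = μ) :
      Ffun p q v v' ∈ energies p q μ :=
    ⟨v, v', hv.memH1 (hm ▸ hμ.ne'), hm, rfl⟩
  obtain ⟨C, hC⟩ := hbdd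
  obtain ⟨u₀, u₀', hu₀, hm₀, hF₀⟩ := hneg
  have hbelow : BddBelow (energies p q μ) := by
    refine ⟨C, ?_⟩
    rintro _ ⟨v, v', hv, hm, rfl⟩
    exact hC v v' hv.isH1 hm
  have hglb := isGLB_csInf ⟨_, hmem hu₀ hm₀⟩ hbelow
  obtain ⟨u, u', hu, hm, hF⟩ := mem_energies_of_isGLB hp hp' hq hq' hμ hglb
    ((hglb.1 (hmem hu₀ hm₀)).trans_lt hF₀)
  exact ⟨u, u', hu.isH1, hm, fun v v' hv hvm => hF.trans_le (hglb.1 (hmem hv hvm))⟩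
end
end

section
/- Let 2 < q < 4 and μ > 0. Suppose D_q is bounded below on the set of u ∈ H¹(ℝ) with ‖u‖₂² = μ and that there exists u₀ in this set with D_q(u₀) < 0. Then the constrained infimum is attained: there exists u ∈ H¹(ℝ) with ‖u‖₂² = μ such that D_q(u) ≤ D_q(v) for every v ∈ H¹(ℝ) with ‖v‖₂² = μ. -/
/-!
Integrating `(u²)' = 2uu'` from `x` to `±∞` and applying Cauchy–Schwarz gives the trace inequality
`u(x)⁴ ≤ ‖u‖₂² ‖u'‖₂²`, which at `x = 0` is an equality for `A e^{-k|x|}`. Hence on functions of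
mass `μ` the functional `D_q(u)` is at least `φ(|u(0)|)` with `φ(s) = s⁴ / (2μ) - s^q / q`, whereas
`A e^{-(A² / μ)|x|}` with `A > 0` has mass `μ` and energy exactly `φ(A)`. It remains to take for `A`
a minimizer of `φ` on `[0, ∞)`, which exists because `0 < q < 4`.
-/

open MeasureTheory Real Set

noncomputable section

open Filter Topology

section RealPowers

variable {p q : ℝ}

theorem rpow_div_sub_rpow_div_le {x : ℝ} (hx : 0 ≤ x) (hq : 0 < q) (hqp : q ≤ p) :
    x ^ q / q - x ^ p / p ≤ 1 / q - 1 / p := by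
  have hp : 0 < p := hq.trans_le hqp
  have bernoulli : (1 + (x ^ p - 1)) ^ (q / p) ≤ 1 + q / p * (x ^ p - 1) :=
    rpow_one_add_le_one_add_mul_self (by linarith [rpow_nonneg hx p]) (by positivity)
      ((div_le_one hp).2 hqp)
  rw [add_sub_cancel, ← rpow_mul hx, mul_div_cancel₀ _ hp.ne'] at bernoulli
  have hdiv : x ^ q / q ≤ (1 + q / p * (x ^ p - 1)) / q := by gcongr
  have hexpand : (1 + q / p * (x ^ p - 1)) / q = 1 / q + x ^ p / p - 1 / p := by
    field_simp
    ring
  linarith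

theorem exists_pos_forall_mul_rpow_sub_mul_rpow_le {b c : ℝ} (hb : 0 < b) (hc : 0 < c)
    (hq : 0 < q) (hqp : q < p) :
    ∃ t, 0 < t ∧ ∀ s, 0 ≤ s → c * t ^ p - b * t ^ q ≤ c * s ^ p - b * s ^ q := by
  have hp : 0 < p := hq.trans hqp
  -- The critical point of `s ↦ c s ^ p - b s ^ q`.
  let t : ℝ := (b * q / (c * p)) ^ (p - q)⁻¹
  have ht : 0 < t := by positivity
  have htq : 0 < t ^ q := by positivity
  have hcrit : c * t ^ p = b * q * t ^ q / p := by
    have hpow : t ^ (p - q) = b * q / (c * p) :=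
      rpow_inv_rpow (by positivity) (sub_pos.2 hqp).ne'
    rw [rpow_sub ht, div_eq_iff htq.ne'] at hpow
    rw [hpow]
    field_simp
  refine ⟨t, ht, fun s hs => ?_⟩
  have hscale (r : ℝ) : s ^ r = t ^ r * (s / t) ^ r := by
    rw [← mul_rpow ht.le (by positivity), mul_div_cancel₀ _ ht.ne']
  calc c * t ^ p - b * t ^ q
      = -(b * q * t ^ q * (1 / q - 1 / p)) := by
        rw [hcrit]
        field_simp
        ring
    _ ≤ -(b * q * t ^ q * ((s / t) ^ q / q - (s / t) ^ p / p)) := by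
        refine neg_le_neg (mul_le_mul_of_nonneg_left ?_ (by positivity))
        exact rpow_div_sub_rpow_div_le (by positivity) hq hqp.le
    _ = c * t ^ p * (s / t) ^ p - b * (t ^ q * (s / t) ^ q) := by
        rw [hcrit]
        field_simp
        ring
    _ = c * s ^ p - b * s ^ q := by rw [hscale p, hscale q, mul_assoc]

end RealPowers

theorem eq_of_continuous_of_forall_lt_of_gt {X : Type*} [TopologicalSpace X] [T2Space X]
    {f : ℝ → X} (hf : Continuous f) {x : ℝ} (h : ∀ a b, a < x → x < b → f b = f a) (y : ℝ) :
    f y = f x := by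
  have hleft : ∀ a < x, f a = f x := fun a ha =>
    tendsto_nhds_unique (l := 𝓝[>] x)
      (tendsto_const_nhds.congr' (eventually_nhdsWithin_of_forall fun b hb => (h a b ha hb).symm))
      (hf.continuousWithinAt (s := Ioi x) (x := x))
  rcases lt_trichotomy y x with hy | rfl | hy
  · exact hleft y hy
  · rfl
  · exact (h (x - 1) y (sub_one_lt x) hy).trans (hleft _ (sub_one_lt x))

theorem exists_pos_lt_of_integrable {g : ℝ → ℝ} (hg : Integrable g) {ε : ℝ} (hε : 0 < ε) :
    ∃ R, 0 < R ∧ g R < ε := by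
  by_contra! hle
  have hfinite : volume (Ioi (0 : ℝ)) < ⊤ :=
    (measure_mono fun R hR => hle R hR).trans_lt (hg.measure_ge_lt_top hε)
  simp at hfinite

theorem sq_integral_abs_mul_le {α : Type*} [MeasurableSpace α] {ν : Measure α} {f g : α → ℝ}
    (hf : MemLp f 2 ν) (hg : MemLp g 2 ν) :
    (∫ x, |f x * g x| ∂ν) ^ 2 ≤ (∫ x, f x ^ 2 ∂ν) * ∫ x, g x ^ 2 ∂ν := by
  have hf0 : 0 ≤ ∫ x, f x ^ 2 ∂ν := integral_nonneg fun x => sq_nonneg (f x)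
  have hg0 : 0 ≤ ∫ x, g x ^ 2 ∂ν := integral_nonneg fun x => sq_nonneg (g x)
  have holder : ∫ x, |f x * g x| ∂ν ≤ √(∫ x, f x ^ 2 ∂ν) * √(∫ x, g x ^ 2 ∂ν) := by
    simpa [abs_mul, sqrt_eq_rpow] using integral_mul_norm_le_Lp_mul_Lq
      HolderConjugate.two_two (f := f) (g := g) (μ := ν) (by simpa using hf) (by simpa using hg)
  calc (∫ x, |f x * g x| ∂ν) ^ 2
      ≤ (√(∫ x, f x ^ 2 ∂ν) * √(∫ x, g x ^ 2 ∂ν)) ^ 2 := by gcongr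
    _ = (∫ x, f x ^ 2 ∂ν) * ∫ x, g x ^ 2 ∂ν := by rw [mul_pow, sq_sqrt hf0, sq_sqrt hg0]

namespace IsH1

variable {u u' : ℝ → ℝ}

theorem locallyIntegrable_or_eq_zero (h : IsH1 u u') : LocallyIntegrable u' ∨ u = 0 := by
  refine or_iff_not_imp_left.2 fun hloc => ?_
  obtain ⟨hcont, hsq, -, hftc⟩ := h
  obtain ⟨x, hx⟩ : ∃ x, ¬IntegrableAtFilter u' (𝓝 x) := by
    simpa only [LocallyIntegrable, not_forall] using hloc
  -- Interval integrals of non-integrable functions are `0`: such a derivative makes `u` constant.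
  have hstep (a b : ℝ) (ha : a < x) (hb : x < b) : u b = u a := by
    have hint : ¬IntervalIntegrable u' volume a b := fun hint =>
      hx ⟨_, Ioc_mem_nhds ha hb, hint.1⟩
    have huab := hftc a b (ha.trans hb).le
    rwa [intervalIntegral.integral_undef hint, sub_eq_zero] at huab
  have hconst : u = fun _ => u x := funext (eq_of_continuous_of_forall_lt_of_gt hcont hstep)
  have hzero : u x = 0 := by
    rw [hconst] at hsq
    simpa [integrable_const_iff, isFiniteMeasure_iff] using hsq
  rw [hconst, hzero]
  rfl

theorem memLp (h : IsH1 u u') : MemLp u 2 :=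
  (memLp_two_iff_integrable_sq h.1.aestronglyMeasurable).2 h.2.1

theorem memLp_deriv (h : IsH1 u u') (hloc : LocallyIntegrable u') : MemLp u' 2 :=
  (memLp_two_iff_integrable_sq hloc.aestronglyMeasurable).2 h.2.2.1

theorem eq_add_integral (h : IsH1 u u') (a x : ℝ) : u x = u a + ∫ t in a..x, u' t := by
  rcases le_total a x with hax | hxa
  · rw [← h.2.2.2 a x hax, add_sub_cancel]
  · rw [intervalIntegral.integral_symm, ← h.2.2.2 x a hxa, neg_sub, add_sub_cancel]

theorem ae_hasDerivAt (h : IsH1 u u') (hloc : LocallyIntegrable u') :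
    ∀ᵐ x, HasDerivAt u (u' x) x := by
  filter_upwards [LocallyIntegrable.ae_hasDerivAt_integral hloc] with x hx
  rw [funext (h.eq_add_integral 0)]
  exact (hx 0).const_add (u 0)

theorem absolutelyContinuousOnInterval (h : IsH1 u u') (hloc : LocallyIntegrable u') (a b : ℝ) :
    AbsolutelyContinuousOnInterval u a b := by
  have hconst : AbsolutelyContinuousOnInterval (fun _ => u a) a b :=
    contDiffOn_const.absolutelyContinuousOnInterval
  have hint : IntervalIntegrable u' volume a b :=
    (hloc.integrableOn_isCompact isCompact_uIcc).intervalIntegrable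
  rw [funext (h.eq_add_integral a)]
  exact hconst.fun_add
    (hint.absolutelyContinuousOnInterval_intervalIntegral left_mem_uIcc)

theorem sq_sub_sq_eq_integral (h : IsH1 u u') (hloc : LocallyIntegrable u') (a b : ℝ) :
    u b ^ 2 - u a ^ 2 = 2 * ∫ x in a..b, u x * u' x := by
  have hac := h.absolutelyContinuousOnInterval hloc a b
  rw [sq, sq, ← hac.integral_deriv_mul_eq_sub hac, ← intervalIntegral.integral_const_mul]
  refine intervalIntegral.integral_congr_ae ?_
  filter_upwards [h.ae_hasDerivAt hloc] with x hx _
  rw [hx.deriv]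
  ring

theorem sq_le_integral_abs_mul (h : IsH1 u u') (hloc : LocallyIntegrable u') (x : ℝ) :
    u x ^ 2 ≤ ∫ y, |u y * u' y| := by
  have hint : Integrable fun y => u y * u' y := h.memLp.integrable_mul (h.memLp_deriv hloc)
  refine le_of_forall_pos_le_add fun ε hε => ?_
  obtain ⟨R, hR, hRε⟩ : ∃ R, 0 < R ∧ u (x + R) ^ 2 + u (x - R) ^ 2 < ε :=
    exists_pos_lt_of_integrable ((h.2.1.comp_add_left x).add (h.2.1.comp_sub_left x)) hε
  have hright := h.sq_sub_sq_eq_integral hloc x (x + R)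
  have hleft := h.sq_sub_sq_eq_integral hloc (x - R) x
  have hright_le : -(∫ y in x..x + R, u y * u' y) ≤ ∫ y in x..x + R, |u y * u' y| :=
    (neg_le_abs _).trans (intervalIntegral.abs_integral_le_integral_abs (by linarith))
  have hleft_le : (∫ y in x - R..x, u y * u' y) ≤ ∫ y in x - R..x, |u y * u' y| :=
    (le_abs_self _).trans (intervalIntegral.abs_integral_le_integral_abs (by linarith))
  have hsplit := intervalIntegral.integral_add_adjacent_intervals
    (hint.abs.intervalIntegrable (a := x - R) (b := x))
    (hint.abs.intervalIntegrable (a := x) (b := x + R))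
  have hwhole : ∫ y in x - R..x + R, |u y * u' y| ≤ ∫ y, |u y * u' y| := by
    rw [intervalIntegral.integral_of_le (by linarith)]
    exact setIntegral_le_integral hint.abs (Eventually.of_forall fun y => abs_nonneg _)
  linarith

theorem pow_four_le_mass_mul_integral_sq (h : IsH1 u u') (x : ℝ) :
    u x ^ 4 ≤ mass u * ∫ y, u' y ^ 2 := by
  rcases h.locallyIntegrable_or_eq_zero with hloc | rfl
  · calc u x ^ 4 = (u x ^ 2) ^ 2 := by ring
      _ ≤ (∫ y, |u y * u' y|) ^ 2 := by
          gcongr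
          exact h.sq_le_integral_abs_mul hloc x
      _ ≤ mass u * ∫ y, u' y ^ 2 := sq_integral_abs_mul_le h.memLp (h.memLp_deriv hloc)
  · simp [mass]

theorem le_Dfun (h : IsH1 u u') (hu : 0 < mass u) (q : ℝ) :
    1 / (2 * mass u) * |u 0| ^ 4 - 1 / q * |u 0| ^ q ≤ Dfun q u u' := by
  have htrace : |u 0| ^ 4 / mass u ≤ ∫ x, u' x ^ 2 := by
    rw [div_le_iff₀' hu, Even.pow_abs (by decide)]
    exact h.pow_four_le_mass_mul_integral_sq 0
  have hhalf : 1 / (2 * mass u) * |u 0| ^ 4 = 1 / 2 * (|u 0| ^ 4 / mass u) := by ring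
  unfold Dfun
  linarith

end IsH1

theorem integral_exp_neg_mul_abs {b : ℝ} (hb : 0 < b) : ∫ x : ℝ, exp (-b * |x|) = 2 / b := by
  rw [integral_comp_abs (f := fun x => exp (-b * x)), integral_exp_mul_Ioi (neg_neg_iff_pos.2 hb)]
  simp [div_eq_mul_inv]

/-- The peaked exponential `x ↦ A e^{-k|x|}` of height `A` and decay rate `k`. For `k > 0` these are
the extremals of the trace inequality at `0`, hence the candidate minimizers of `D_q`. -/
def peakon (A k x : ℝ) : ℝ := A * exp (-k * |x|)

namespace peakon

variable (A : ℝ) {k : ℝ}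

theorem continuous (k : ℝ) : Continuous (peakon A k) := by
  unfold peakon
  fun_prop

theorem sq_apply (k x : ℝ) : peakon A k x ^ 2 = A ^ 2 * exp (-(2 * k) * |x|) := by
  rw [peakon, mul_pow, ← exp_nat_mul]
  ring_nf

theorem hasDerivAt (k : ℝ) {x : ℝ} (hx : x ≠ 0) :
    HasDerivAt (peakon A k) (-(k * SignType.sign x) * peakon A k x) x := by
  refine HasDerivAt.congr_deriv (((hasDerivAt_abs hx).const_mul (-k)).exp.const_mul A) ?_
  rw [peakon]
  ring

theorem abs_deriv (k : ℝ) {x : ℝ} (hx : x ≠ 0) :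
    |deriv (peakon A k) x| = |k * peakon A k x| := by
  rw [(hasDerivAt A k hx).deriv]
  rcases hx.lt_or_gt with hneg | hpos
  · simp [sign_neg hneg]
  · simp [sign_pos hpos]

theorem sq_deriv_ae_eq (k : ℝ) :
    (fun x => deriv (peakon A k) x ^ 2) =ᵐ[volume] fun x => k ^ 2 * peakon A k x ^ 2 := by
  filter_upwards [Measure.ae_ne volume 0] with x hx
  rw [← sq_abs, abs_deriv A k hx, sq_abs, mul_pow]

theorem integral_deriv (k a b : ℝ) :
    ∫ x in a..b, deriv (peakon A k) x = peakon A k b - peakon A k a := by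
  have hint : IntervalIntegrable (deriv (peakon A k)) volume a b := by
    refine ((continuous A k).const_mul k |>.intervalIntegrable a b).mono_fun
      (measurable_deriv _).aestronglyMeasurable (ae_restrict_of_ae ?_)
    filter_upwards [Measure.ae_ne volume 0] with x hx
    exact (abs_deriv A k hx).le
  exact integral_eq_of_hasDerivAt_off_countable _ _ (countable_singleton 0)
    (continuous A k).continuousOn
    (fun x hx => (hasDerivAt A k hx.2).differentiableAt.hasDerivAt) hint

theorem mass_eq (hk : 0 < k) : mass (peakon A k) = A ^ 2 / k := by
  simp only [mass, sq_apply]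
  rw [integral_const_mul, integral_exp_neg_mul_abs (by positivity)]
  field_simp

theorem integrable_sq (hk : 0 < k) : Integrable fun x => peakon A k x ^ 2 := by
  simp only [sq_apply]
  refine Integrable.const_mul (Integrable.of_integral_ne_zero ?_) _
  rw [integral_exp_neg_mul_abs (by positivity)]
  positivity

theorem isH1 (hk : 0 < k) : IsH1 (peakon A k) (deriv (peakon A k)) :=
  ⟨continuous A k, integrable_sq A hk,
    ((integrable_sq A hk).const_mul (k ^ 2)).congr (sq_deriv_ae_eq A k).symm,
    fun a b _ => (integral_deriv A k a b).symm⟩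

theorem integral_sq_deriv (hk : 0 < k) : ∫ x, deriv (peakon A k) x ^ 2 = k * A ^ 2 := by
  rw [integral_congr_ae (sq_deriv_ae_eq A k), integral_const_mul, ← mass, mass_eq A hk]
  field_simp

theorem Dfun_eq (hk : 0 < k) (q : ℝ) :
    Dfun q (peakon A k) (deriv (peakon A k)) = 1 / 2 * (k * A ^ 2) - 1 / q * |A| ^ q := by
  rw [Dfun, integral_sq_deriv A hk]
  simp [peakon]

end peakon

theorem stmt16_general {q μ : ℝ} (hq : 0 < q) (hq' : q < 4) (hμ : 0 < μ) :
    ∃ u u' : ℝ → ℝ, IsH1 u u' ∧ mass u = μ ∧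
      ∀ v v' : ℝ → ℝ, IsH1 v v' → mass v = μ → Dfun q u u' ≤ Dfun q v v' := by
  obtain ⟨A, hA, hmin⟩ : ∃ A, 0 < A ∧ ∀ s, 0 ≤ s →
      1 / (2 * μ) * A ^ (4 : ℝ) - 1 / q * A ^ q ≤ 1 / (2 * μ) * s ^ (4 : ℝ) - 1 / q * s ^ q :=
    exists_pos_forall_mul_rpow_sub_mul_rpow_le (by positivity) (by positivity) hq hq'
  simp only [rpow_ofNat] at hmin
  have hk : 0 < A ^ 2 / μ := by positivity
  refine ⟨peakon A (A ^ 2 / μ), deriv (peakon A (A ^ 2 / μ)), peakon.isH1 A hk, ?_,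
    fun v v' hv hvμ => ?_⟩
  · rw [peakon.mass_eq A hk, div_div_cancel₀ (by positivity)]
  · calc Dfun q (peakon A (A ^ 2 / μ)) (deriv (peakon A (A ^ 2 / μ)))
        = 1 / (2 * μ) * A ^ 4 - 1 / q * A ^ q := by
          rw [peakon.Dfun_eq A hk, abs_of_pos hA]
          ring
      _ ≤ 1 / (2 * μ) * |v 0| ^ 4 - 1 / q * |v 0| ^ q := hmin _ (abs_nonneg _)
      _ ≤ Dfun q v v' := by
          subst hvμ
          exact hv.le_Dfun hμ q

theorem stmt16 (q μ : ℝ) (hq : 2 < q) (hq' : q < 4) (hμ : 0 < μ)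
    (hbdd : ∃ C : ℝ, ∀ u u' : ℝ → ℝ, IsH1 u u' → mass u = μ → C ≤ Dfun q u u')
    (hneg : ∃ u₀ u₀' : ℝ → ℝ, IsH1 u₀ u₀' ∧ mass u₀ = μ ∧ Dfun q u₀ u₀' < 0) :
    ∃ u u' : ℝ → ℝ, IsH1 u u' ∧ mass u = μ ∧
      ∀ v v' : ℝ → ℝ, IsH1 v v' → mass v = μ → Dfun q u u' ≤ Dfun q v v' :=
  stmt16_general (by linarith) hq' hμ
end
end

section
/- Let 2 < p ≤ 6, 2 < q ≤ 4 and ω > 0. Then there exists exactly one function u : ℝ → ℝ with the following properties: u ∈ H¹(ℝ); u(x) > 0 for all x ∈ ℝ; u is twice continuously differentiable on ℝ ∖ {0} and satisfies u''(x) + u(x)^{p−1} = ω·u(x) for every x ≠ 0; the one-sided derivatives u'(0⁻) and u'(0⁺) exist; and u'(0⁻) − u'(0⁺) = u(0)^{q−1}. -/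
open MeasureTheory Real Set

noncomputable section

/-!
On a half-line, a positive square-integrable solution tends to `0`, so its conserved energy
`u'² - ω u² + (2 / p) u ^ p` vanishes. Zero energy turns the equation into the Riccati equation
`z' = κ (1 - z²)` for `z = -u' / (√ω u)`, where `κ = (p - 2) / 2 * √ω`; hence `z = tanh (κ (x + ξ))`
and `u` is a translate of the soliton `φ(x) = (p ω / 2 / cosh² (κ x)) ^ (1 / (p - 2))`. Thus `u` is
`φ(x + ξ)` on the right of `0` and `φ(-x + η)` on the left. Continuity gives `η = ± ξ`, and the
positive jump of `u'` excludes `η = -ξ`, so `u = φ(|x| + ξ)`. For such `u` the jump condition reads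
`2 √ω tanh (κ ξ) = φ(ξ) ^ (q - 2)`. A root must be positive, the left side increases from `0` and
the right side decreases to `0` on `[0, ∞)`, so there is exactly one.
-/

open Filter Topology

section Hyperbolic

theorem hasDerivAt_tanh (x : ℝ) : HasDerivAt tanh (1 - tanh x ^ 2) x := by
  have hcosh : cosh x ≠ 0 := (cosh_pos x).ne'
  have h := (hasDerivAt_sinh x).div (hasDerivAt_cosh x) hcosh
  rw [show (sinh / cosh : ℝ → ℝ) = tanh from funext fun y => (tanh_eq_sinh_div_cosh y).symm] at h
  refine h.congr_deriv ?_
  rw [tanh_eq_sinh_div_cosh]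
  field_simp

theorem one_sub_tanh_sq (x : ℝ) : 1 - tanh x ^ 2 = 1 / cosh x ^ 2 := by
  have hcosh : cosh x ≠ 0 := (cosh_pos x).ne'
  rw [tanh_eq_sinh_div_cosh]
  field_simp
  linarith [cosh_sq_sub_sinh_sq x]

theorem strictMono_tanh : StrictMono tanh := fun x y hxy =>
  (artanh_lt_artanh_iff ⟨neg_one_lt_tanh x, tanh_lt_one x⟩ ⟨neg_one_lt_tanh y, tanh_lt_one y⟩).1
    (by rwa [artanh_tanh, artanh_tanh])

theorem hasDerivAt_artanh {x : ℝ} (hx : x ∈ Ioo (-1) 1) :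
    HasDerivAt artanh (1 / (1 - x ^ 2)) x := by
  have hadd : 1 + x ≠ 0 := by linarith [hx.1]
  have hsub : 1 - x ≠ 0 := by linarith [hx.2]
  have h := ((((hasDerivAt_id x).const_add 1).log hadd).sub
    (((hasDerivAt_id x).const_sub 1).log hsub)).const_mul (1 / 2)
  refine (h.congr_deriv ?_).congr_of_eventuallyEq ?_
  · rw [show 1 - x ^ 2 = (1 + x) * (1 - x) by ring]
    simp only [id]
    field_simp
    ring
  · filter_upwards [isOpen_Ioo.mem_nhds hx] with y hy
    rw [artanh_eq_half_log (Ioo_subset_Icc_self hy),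
      log_div (by linarith [hy.1]) (by linarith [hy.2])]
    rfl

end Hyperbolic

theorem existsUnique_eq_of_strictMono_of_antitoneOn {f g : ℝ → ℝ} {a : ℝ} (hf : StrictMono f)
    (hf_cont : Continuous f) (hfa : f a = 0) (hg : AntitoneOn g (Ici a)) (hg_cont : Continuous g)
    (hg_pos : ∀ x, 0 < g x) (hg_lim : Tendsto g atTop (𝓝 0)) : ∃! x, f x = g x := by
  have hroot_mem : ∀ x, f x = g x → x ∈ Ici a := fun x hx =>
    (hf.lt_iff_lt.1 (by rw [hfa, hx]; exact hg_pos x)).le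
  obtain ⟨b, hb, hb_lt⟩ : ∃ b ≥ a + 1, g b < f (a + 1) :=
    ((eventually_ge_atTop (a + 1)).and
      (hg_lim.eventually_lt_const (hfa ▸ hf (lt_add_one a)))).exists
  obtain ⟨x, hx⟩ := mem_range_of_exists_le_of_exists_ge (hf_cont.sub hg_cont) (c := 0)
    ⟨a, by simpa [hfa] using (hg_pos a).le⟩
    ⟨b, sub_nonneg.2 (hb_lt.le.trans (hf.monotone hb))⟩
  have hmono : StrictMonoOn (fun y => f y - g y) (Ici a) := fun y hy z hz hyz =>
    (sub_lt_sub_right (hf hyz) _).trans_le (sub_le_sub_left (hg hy hz hyz.le) _)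
  refine ⟨x, sub_eq_zero.1 hx, fun y hy => ?_⟩
  exact hmono.injOn (hroot_mem y hy) (hroot_mem x (sub_eq_zero.1 hx))
    ((sub_eq_zero.2 hy).trans hx.symm)

section HalfLine

variable {f : ℝ → ℝ} {a : ℝ}

/-- `f ^ 3` converges, because its derivative `3 f ^ 2 f'` is integrable, and the integrability of
`f ^ 2` leaves only the limit `0`. -/
theorem tendsto_zero_of_integrableOn_sq_of_abs_deriv_le {C : ℝ}
    (hf : DifferentiableOn ℝ f (Ioi a)) (hC : ∀ x ∈ Ioi a, |deriv f x| ≤ C)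
    (hint : IntegrableOn (fun x => f x ^ 2) (Ioi a)) : Tendsto f atTop (𝓝 0) := by
  have hderiv : ∀ x ∈ Ioi a, HasDerivAt (fun y => f y ^ 3) (3 * (f x ^ 2 * deriv f x)) x := by
    intro x hx
    refine ((hf.hasDerivAt (Ioi_mem_nhds hx)).pow 3).congr_deriv ?_
    push_cast
    ring
  have hderiv_int : IntegrableOn (fun x => 3 * (f x ^ 2 * deriv f x)) (Ioi a) :=
    (hint.mul_bdd (measurable_deriv f).aestronglyMeasurable
      (ae_restrict_of_forall_mem measurableSet_Ioi hC)).const_mul 3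
  have hcube := tendsto_limUnder_of_hasDerivAt_of_integrableOn_Ioi hderiv hderiv_int
  set m := |limUnder atTop fun y => f y ^ 3| ^ (3⁻¹ : ℝ)
  have habs : Tendsto (fun x => |f x|) atTop (𝓝 m) := by
    refine (hcube.abs.rpow_const (p := 3⁻¹) (Or.inr (by norm_num))).congr fun x => ?_
    rw [abs_pow]
    exact_mod_cast pow_rpow_inv_natCast (abs_nonneg (f x)) three_ne_zero
  have hm : m ^ 2 = 0 := by
    refine IntegrableAtFilter.eq_zero_of_tendsto ⟨Ioi a, Ioi_mem_atTop a, hint⟩ (fun s hs => ?_)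
      ((habs.pow 2).congr fun x => sq_abs (f x))
    obtain ⟨b, hb⟩ := mem_atTop_sets.1 hs
    exact measure_mono_top hb volume_Ici
  rw [pow_eq_zero_iff two_ne_zero] at hm
  rw [hm] at habs
  exact (tendsto_zero_iff_abs_tendsto_zero f).2 habs

theorem exists_tendsto_atTop_tendsto_deriv_zero {l : ℝ} (hf : DifferentiableOn ℝ f (Ioi a))
    (hlim : Tendsto f atTop (𝓝 l)) :
    ∃ ξ : ℝ → ℝ, Tendsto ξ atTop atTop ∧ Tendsto (fun x => deriv f (ξ x)) atTop (𝓝 0) := by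
  have hslope : ∀ x > a, ∃ y ∈ Ioo x (x + 1), deriv f y = f (x + 1) - f x := by
    intro x hx
    have hsub : Icc x (x + 1) ⊆ Ioi a := fun y hy => hx.trans_le hy.1
    obtain ⟨y, hy, h⟩ := exists_deriv_eq_slope f (lt_add_one x) (hf.continuousOn.mono hsub)
      (hf.mono (Ioo_subset_Icc_self.trans hsub))
    exact ⟨y, hy, by rw [h, add_sub_cancel_left, div_one]⟩
  choose! ξ hξ hξ_deriv using hslope
  refine ⟨ξ, tendsto_atTop_mono' atTop ?_ tendsto_id, ?_⟩
  · filter_upwards [eventually_gt_atTop a] with x hx using (hξ x hx).1.le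
  · have hdiff := (hlim.comp (tendsto_atTop_add_const_right atTop 1 tendsto_id)).sub hlim
    rw [sub_self] at hdiff
    refine hdiff.congr' ?_
    filter_upwards [eventually_gt_atTop a] with x hx using (hξ_deriv x hx).symm

end HalfLine

section Reflection

theorem integrableOn_Ioi_comp_add_const {E : Type*} [NormedAddCommGroup E] {f : ℝ → E} {a b : ℝ}
    (hf : IntegrableOn f (Ioi (a + b))) : IntegrableOn (fun x => f (x + b)) (Ioi a) := by
  have h := (measurePreserving_add_right volume b).integrableOn_comp_preimage
    (measurableEmbedding_addRight b) (f := f) (s := Ioi (a + b))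
  rw [preimage_add_const_Ioi, add_sub_cancel_right] at h
  exact h.2 hf

theorem integrable_comp_abs {E : Type*} [NormedAddCommGroup E] {f : ℝ → E}
    (hf : IntegrableOn f (Ioi 0)) : Integrable fun x => f |x| := by
  have hpos : IntegrableOn (fun x => f |x|) (Ioi 0) :=
    hf.congr_fun (fun x hx => by rw [abs_of_pos hx]) measurableSet_Ioi
  have hneg : IntegrableOn (fun x => f |x|) (Iic 0) := by
    have h := (integrableOn_Ici_iff_integrableOn_Ioi (by finiteness)).2 hpos
    simpa using h.comp_neg
  rw [← integrableOn_univ, ← Iic_union_Ioi (a := (0 : ℝ))]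
  exact hneg.union hpos

theorem isH1_comp_abs {f : ℝ → ℝ} (hf : ContDiff ℝ 1 f)
    (hint : IntegrableOn (fun x => f x ^ 2) (Ioi 0))
    (hint' : IntegrableOn (fun x => deriv f x ^ 2) (Ioi 0)) :
    IsH1 (fun x => f |x|) (deriv fun x => f |x|) := by
  have hcont : Continuous fun x => f |x| := hf.continuous.comp continuous_abs
  have hderiv : ∀ x : ℝ, x ≠ 0 →
      HasDerivAt (fun x => f |x|) (deriv f |x| * SignType.sign x) x := fun x hx =>
    (hf.differentiable one_ne_zero |x|).hasDerivAt.comp x (hasDerivAt_abs hx)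
  have habs : ∀ᵐ x : ℝ, |deriv (fun x => f |x|) x| = |(deriv f |x|)| := by
    filter_upwards [Measure.ae_ne volume (0 : ℝ)] with x hx
    rw [(hderiv x hx).deriv]
    rcases lt_or_gt_of_ne hx with h | h <;> simp [h]
  refine ⟨hcont, integrable_comp_abs hint, ?_, fun b c hbc => ?_⟩
  · refine (integrable_comp_abs hint').congr ?_
    filter_upwards [habs] with x hx using (sq_eq_sq_iff_abs_eq_abs _ _).2 hx.symm
  · refine (integral_eq_of_hasDerivAt_off_countable_of_le _ _ hbc (countable_singleton 0)
      hcont.continuousOn (fun x hx => (hderiv x hx.2).differentiableAt.hasDerivAt) ?_).symm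
    have hdom : Continuous fun x => |(deriv f |x|)| :=
      ((hf.continuous_deriv le_rfl).comp continuous_abs).abs
    refine (hdom.intervalIntegrable b c).mono_fun' (measurable_deriv _).aestronglyMeasurable ?_
    exact ae_restrict_of_ae (habs.mono fun x hx => hx.le)

end Reflection

/-- `u` is a positive `C²` solution of the stationary equation `u'' + u ^ (p - 1) = ω u` on `s`.
Derivatives are taken in `ℝ`, so this is meant for open `s`. -/
structure IsPosSolutionOn (p ω : ℝ) (u : ℝ → ℝ) (s : Set ℝ) : Prop where
  pos : ∀ x ∈ s, 0 < u x
  contDiffOn : ContDiffOn ℝ 2 u s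
  ode : ∀ x ∈ s, deriv (deriv u) x + u x ^ (p - 1) = ω * u x

/-- The mechanical energy `u'² - ω u² + (2 / p) u ^ p`, a first integral of the stationary
equation. -/
def energy (p ω : ℝ) (u : ℝ → ℝ) (x : ℝ) : ℝ :=
  deriv u x ^ 2 - ω * u x ^ 2 + 2 / p * u x ^ p

namespace IsPosSolutionOn

variable {p ω : ℝ} {u v : ℝ → ℝ} {s t : Set ℝ}

theorem mono (hu : IsPosSolutionOn p ω u s) (hts : t ⊆ s) : IsPosSolutionOn p ω u t :=
  ⟨fun x hx => hu.pos x (hts hx), hu.contDiffOn.mono hts, fun x hx => hu.ode x (hts hx)⟩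

theorem union (hu : IsPosSolutionOn p ω u s) (hu' : IsPosSolutionOn p ω u t) (hs : IsOpen s)
    (ht : IsOpen t) : IsPosSolutionOn p ω u (s ∪ t) :=
  ⟨fun x hx => hx.elim (hu.pos x) (hu'.pos x),
    hu.contDiffOn.union_of_isOpen hu'.contDiffOn hs ht,
    fun x hx => hx.elim (hu.ode x) (hu'.ode x)⟩

theorem congr (hu : IsPosSolutionOn p ω u s) (hs : IsOpen s) (hvu : EqOn v u s) :
    IsPosSolutionOn p ω v s :=
  ⟨fun x hx => hvu hx ▸ hu.pos x hx, hu.contDiffOn.congr hvu,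
    fun x hx => by rw [(hvu.deriv hs).deriv hs hx, hvu hx, hu.ode x hx]⟩

theorem comp_neg (hu : IsPosSolutionOn p ω u s) :
    IsPosSolutionOn p ω (fun x => u (-x)) (Neg.neg ⁻¹' s) := by
  refine ⟨fun x hx => hu.pos _ hx,
    hu.contDiffOn.comp contDiff_neg.contDiffOn (mapsTo_preimage _ _), fun x hx => ?_⟩
  have hderiv : deriv (fun x => u (-x)) = fun x => -deriv u (-x) :=
    funext fun x => deriv_comp_neg u x
  have hderiv2 : deriv (fun x => -deriv u (-x)) x = deriv (deriv u) (-x) := by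
    rw [deriv.fun_neg, deriv_comp_neg, neg_neg]
  rw [hderiv, hderiv2, hu.ode _ hx]

theorem comp_add_const (hu : IsPosSolutionOn p ω u s) (b : ℝ) :
    IsPosSolutionOn p ω (fun x => u (x + b)) ((· + b) ⁻¹' s) := by
  refine ⟨fun x hx => hu.pos _ hx,
    hu.contDiffOn.comp (by fun_prop) (mapsTo_preimage _ _), fun x hx => ?_⟩
  have hderiv : deriv (fun x => u (x + b)) = fun x => deriv u (x + b) :=
    funext fun x => deriv_comp_add_const u b x
  rw [hderiv, deriv_comp_add_const, hu.ode _ hx]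

theorem comp_abs (hu : IsPosSolutionOn p ω u (Ioi 0)) :
    IsPosSolutionOn p ω (fun x => u |x|) {0}ᶜ := by
  have hneg : IsPosSolutionOn p ω (fun x => u |x|) (Iio 0) := by
    refine IsPosSolutionOn.congr ?_ isOpen_Iio fun x hx => by rw [abs_of_neg hx]
    simpa using hu.comp_neg
  rw [← Iio_union_Ioi]
  exact hneg.union (hu.congr isOpen_Ioi fun x hx => by rw [abs_of_pos hx]) isOpen_Iio isOpen_Ioi

theorem hasDerivAt (hu : IsPosSolutionOn p ω u s) (hs : IsOpen s) {x : ℝ} (hx : x ∈ s) :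
    HasDerivAt u (deriv u x) x :=
  (hu.contDiffOn.differentiableOn two_ne_zero).hasDerivAt (hs.mem_nhds hx)

theorem hasDerivAt_deriv (hu : IsPosSolutionOn p ω u s) (hs : IsOpen s) {x : ℝ} (hx : x ∈ s) :
    HasDerivAt (deriv u) (ω * u x - u x ^ (p - 1)) x := by
  have hderiv : ContDiffOn ℝ 1 (deriv u) s := hu.contDiffOn.deriv_of_isOpen hs (by norm_num)
  rw [← hu.ode x hx, add_sub_cancel_right]
  exact (hderiv.differentiableOn one_ne_zero).hasDerivAt (hs.mem_nhds hx)

theorem hasDerivAt_energy (hp : p ≠ 0) (hu : IsPosSolutionOn p ω u s) (hs : IsOpen s) {x : ℝ}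
    (hx : x ∈ s) : HasDerivAt (energy p ω u) 0 x := by
  have hderiv := hu.hasDerivAt hs hx
  have hkin := (hu.hasDerivAt_deriv hs hx).pow 2
  have hquad := (hderiv.pow 2).const_mul ω
  have hpow := (hderiv.rpow_const (p := p) (Or.inl (hu.pos x hx).ne')).const_mul (2 / p)
  refine ((hkin.sub hquad).add hpow).congr_deriv ?_
  field_simp
  push_cast
  ring

theorem exists_energy_eq (hp : p ≠ 0) (hu : IsPosSolutionOn p ω u s) (hs : IsOpen s)
    (hs' : IsPreconnected s) : ∃ E, ∀ x ∈ s, energy p ω u x = E :=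
  hs.exists_is_const_of_deriv_eq_zero hs'
    (fun _ hx => (hu.hasDerivAt_energy hp hs hx).differentiableAt.differentiableWithinAt)
    fun _ hx => (hu.hasDerivAt_energy hp hs hx).deriv

end IsPosSolutionOn

theorem exists_mul_sq_sub_mul_rpow_le {p : ℝ} (hp : 2 < p) (ω : ℝ) :
    ∃ K, ∀ y > 0, ω * y ^ 2 - 2 / p * y ^ p ≤ K := by
  have : 0 < p := by linarith
  have hp2 : 0 < p - 2 := by linarith
  set Y := (p * |ω| / 2) ^ (p - 2)⁻¹
  refine ⟨|ω| * Y ^ 2, fun y hy => ?_⟩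
  have hω : ω * y ^ 2 ≤ |ω| * y ^ 2 := by gcongr; exact le_abs_self ω
  rcases le_total y Y with hyY | hYy
  · have hsq : |ω| * y ^ 2 ≤ |ω| * Y ^ 2 := by gcongr
    have hpow : 0 ≤ 2 / p * y ^ p := by positivity
    linarith
  · have hge : p * |ω| / 2 ≤ y ^ (p - 2) := (rpow_inv_le_iff_of_pos (by positivity) hy.le hp2).1 hYy
    have hpow : |ω| * y ^ 2 ≤ 2 / p * y ^ p :=
      calc |ω| * y ^ 2 = 2 / p * (p * |ω| / 2 * y ^ 2) := by field_simp
        _ ≤ 2 / p * (y ^ (p - 2) * y ^ 2) := by gcongr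
        _ = 2 / p * y ^ p := by rw [← rpow_add_natCast hy.ne']; norm_num
    have hnonneg : 0 ≤ |ω| * Y ^ 2 := by positivity
    linarith

namespace IsPosSolutionOn

variable {p ω a : ℝ} {u : ℝ → ℝ}

theorem tendsto_zero (hp : 2 < p) (hu : IsPosSolutionOn p ω u (Ioi a))
    (hint : IntegrableOn (fun x => u x ^ 2) (Ioi a)) : Tendsto u atTop (𝓝 0) := by
  obtain ⟨E, hE⟩ := hu.exists_energy_eq (by linarith) isOpen_Ioi isPreconnected_Ioi
  obtain ⟨K, hK⟩ := exists_mul_sq_sub_mul_rpow_le hp ω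
  refine tendsto_zero_of_integrableOn_sq_of_abs_deriv_le (C := √(E + K))
    (hu.contDiffOn.differentiableOn two_ne_zero) (fun x hx => abs_le_sqrt ?_) hint
  have h := hE x hx
  unfold energy at h
  linarith [hK (u x) (hu.pos x hx)]

theorem energy_eq_zero (hp : 2 < p) (hu : IsPosSolutionOn p ω u (Ioi a))
    (hint : IntegrableOn (fun x => u x ^ 2) (Ioi a)) {x : ℝ} (hx : x ∈ Ioi a) :
    energy p ω u x = 0 := by
  have hp0 : 0 < p := by linarith
  obtain ⟨E, hE⟩ := hu.exists_energy_eq hp0.ne' isOpen_Ioi isPreconnected_Ioi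
  have hu0 := hu.tendsto_zero hp hint
  obtain ⟨ξ, hξ, hξ_deriv⟩ := exists_tendsto_atTop_tendsto_deriv_zero
    (hu.contDiffOn.differentiableOn two_ne_zero) hu0
  have huξ := hu0.comp hξ
  have hlim : Tendsto (fun y => energy p ω u (ξ y)) atTop
      (𝓝 (0 ^ 2 - ω * 0 ^ 2 + 2 / p * 0 ^ p)) :=
    ((hξ_deriv.pow 2).sub ((huξ.pow 2).const_mul ω)).add
      ((huξ.rpow_const (Or.inr hp0.le)).const_mul (2 / p))
  have hconst : (fun y => energy p ω u (ξ y)) =ᶠ[atTop] fun _ => E :=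
    (hξ.eventually_gt_atTop a).mono fun y hy => hE (ξ y) hy
  rw [hE x hx, tendsto_nhds_unique (tendsto_const_nhds.congr' hconst.symm) hlim]
  simp [zero_rpow hp0.ne']

end IsPosSolutionOn

/-- The rate `κ` at which the soliton is stretched: its profile is a power of `1 / cosh (κ x)`. -/
def solitonRate (p ω : ℝ) : ℝ := (p - 2) / 2 * √ω

/-- The soliton `φ`, the even positive solution of the stationary equation on the whole line. It is
written with a power of `1 / cosh ^ 2` so that `φ ^ (p - 2)` has no fractional exponent. -/
def soliton (p ω x : ℝ) : ℝ := (p * ω / 2 / cosh (solitonRate p ω * x) ^ 2) ^ (p - 2)⁻¹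

section Soliton

variable {p ω : ℝ}

theorem solitonRate_pos (hp : 2 < p) (hω : 0 < ω) : 0 < solitonRate p ω :=
  mul_pos (by linarith) (sqrt_pos.2 hω)

theorem hasDerivAt_tanh_solitonRate_mul (p ω x : ℝ) :
    HasDerivAt (fun y => tanh (solitonRate p ω * y))
      (solitonRate p ω * (1 - tanh (solitonRate p ω * x) ^ 2)) x :=
  ((hasDerivAt_tanh _).comp x (hasDerivAt_const_mul (solitonRate p ω))).congr_deriv (mul_comm _ _)

theorem soliton_base_pos (hp : 2 < p) (hω : 0 < ω) (x : ℝ) :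
    0 < p * ω / 2 / cosh (solitonRate p ω * x) ^ 2 := by
  have := cosh_pos (solitonRate p ω * x)
  positivity

theorem soliton_pos (hp : 2 < p) (hω : 0 < ω) (x : ℝ) : 0 < soliton p ω x :=
  rpow_pos_of_pos (soliton_base_pos hp hω x) _

theorem soliton_rpow (hp : 2 < p) (hω : 0 < ω) (x : ℝ) :
    soliton p ω x ^ (p - 2) = p * ω / 2 * (1 - tanh (solitonRate p ω * x) ^ 2) := by
  rw [soliton, rpow_inv_rpow (soliton_base_pos hp hω x).le (by linarith), one_sub_tanh_sq,
    div_eq_mul_one_div]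

theorem eq_soliton_of_rpow_eq (hp : 2 < p) (hω : 0 < ω) {x y : ℝ} (hy : 0 < y)
    (h : y ^ (p - 2) = p * ω / 2 * (1 - tanh (solitonRate p ω * x) ^ 2)) :
    y = soliton p ω x :=
  (rpow_left_inj hy.le (soliton_pos hp hω x).le (by linarith)).1
    (h.trans (soliton_rpow hp hω x).symm)

theorem contDiff_soliton (hp : 2 < p) (hω : 0 < ω) {n : WithTop ℕ∞} :
    ContDiff ℝ n (soliton p ω) := by
  refine ContDiff.rpow_const_of_ne ?_ fun x => (soliton_base_pos hp hω x).ne'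
  exact contDiff_const.div (by fun_prop) fun x => (pow_pos (cosh_pos _) 2).ne'

theorem hasDerivAt_soliton (hp : 2 < p) (hω : 0 < ω) (x : ℝ) :
    HasDerivAt (soliton p ω) (-(√ω * tanh (solitonRate p ω * x) * soliton p ω x)) x := by
  have hbase := soliton_base_pos hp hω x
  have hp2 : p - 2 ≠ 0 := by linarith
  have hbase_eq : ∀ y, p * ω / 2 / cosh (solitonRate p ω * y) ^ 2 =
      p * ω / 2 * (1 - tanh (solitonRate p ω * y) ^ 2) := fun y => by
    rw [one_sub_tanh_sq, mul_one_div]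
  have hderiv : HasDerivAt (fun y => p * ω / 2 / cosh (solitonRate p ω * y) ^ 2)
      (-(2 * solitonRate p ω * tanh (solitonRate p ω * x)) *
        (p * ω / 2 / cosh (solitonRate p ω * x) ^ 2)) x := by
    simp only [hbase_eq]
    refine ((((hasDerivAt_tanh_solitonRate_mul p ω x).pow 2).const_sub 1).const_mul
      (p * ω / 2)).congr_deriv ?_
    push_cast
    ring
  refine (hderiv.rpow_const (p := (p - 2)⁻¹) (Or.inl hbase.ne')).congr_deriv ?_
  rw [rpow_sub_one hbase.ne', ← soliton, solitonRate]
  field_simp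

theorem deriv_soliton (hp : 2 < p) (hω : 0 < ω) :
    deriv (soliton p ω) = fun x => -(√ω * tanh (solitonRate p ω * x) * soliton p ω x) :=
  funext fun x => (hasDerivAt_soliton hp hω x).deriv

theorem isPosSolutionOn_soliton (hp : 2 < p) (hω : 0 < ω) :
    IsPosSolutionOn p ω (soliton p ω) univ := by
  refine ⟨fun x _ => soliton_pos hp hω x, (contDiff_soliton hp hω).contDiffOn, fun x _ => ?_⟩
  have h := (((hasDerivAt_tanh_solitonRate_mul p ω x).const_mul (√ω)).mul
    (hasDerivAt_soliton hp hω x)).neg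
  have hpow : soliton p ω x ^ (p - 1) =
      p * ω / 2 * (1 - tanh (solitonRate p ω * x) ^ 2) * soliton p ω x := by
    rw [← soliton_rpow hp hω, ← rpow_add_one (soliton_pos hp hω x).ne']
    congr 1
    ring
  have hrate : √ω * solitonRate p ω = (p - 2) / 2 * ω := by
    rw [solitonRate, mul_left_comm, mul_self_sqrt hω.le]
  rw [deriv_soliton hp hω, hpow]
  refine (congrArg (· + _) h.deriv).trans ?_
  linear_combination
    -(1 - tanh (solitonRate p ω * x) ^ 2) * soliton p ω x * hrate +
      tanh (solitonRate p ω * x) ^ 2 * soliton p ω x * sq_sqrt hω.le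

theorem soliton_lt_soliton_iff (hp : 2 < p) (hω : 0 < ω) {x y : ℝ} :
    soliton p ω x < soliton p ω y ↔ |y| < |x| := by
  have hκ := solitonRate_pos hp hω
  rw [soliton, soliton, rpow_lt_rpow_iff (soliton_base_pos hp hω x).le (soliton_base_pos hp hω y).le
      (inv_pos.2 (by linarith)),
    div_lt_div_iff_of_pos_left (by positivity) (pow_pos (cosh_pos _) 2) (pow_pos (cosh_pos _) 2),
    pow_lt_pow_iff_left₀ (cosh_pos _).le (cosh_pos _).le two_ne_zero, cosh_lt_cosh, abs_mul,
    abs_mul, mul_lt_mul_iff_right₀ (abs_pos.2 hκ.ne')]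

theorem abs_eq_abs_of_soliton_eq (hp : 2 < p) (hω : 0 < ω) {x y : ℝ}
    (h : soliton p ω x = soliton p ω y) : |x| = |y| := by
  apply le_antisymm <;> refine not_lt.1 fun hlt => ?_
  · exact ((soliton_lt_soliton_iff hp hω).2 hlt).ne h
  · exact ((soliton_lt_soliton_iff hp hω).2 hlt).ne' h

theorem strictAntiOn_soliton (hp : 2 < p) (hω : 0 < ω) : StrictAntiOn (soliton p ω) (Ici 0) :=
  fun x hx y hy hxy => (soliton_lt_soliton_iff hp hω).2 <| by
    rwa [abs_of_nonneg hx, abs_of_nonneg hy]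

theorem soliton_le (hp : 2 < p) (hω : 0 < ω) (x : ℝ) :
    soliton p ω x ≤ (2 * p * ω) ^ (p - 2)⁻¹ * exp (-√ω * x) := by
  have hp2 : 0 < p - 2 := by linarith
  have hcosh : exp (solitonRate p ω * x) / 2 ≤ cosh (solitonRate p ω * x) := by
    rw [cosh_eq]
    linarith [exp_pos (-(solitonRate p ω * x))]
  calc soliton p ω x
      ≤ (p * ω / 2 / (exp (solitonRate p ω * x) / 2) ^ 2) ^ (p - 2)⁻¹ := by
        refine rpow_le_rpow (soliton_base_pos hp hω x).le ?_ (by positivity)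
        gcongr
    _ = (2 * p * ω * exp (-(2 * solitonRate p ω * x))) ^ (p - 2)⁻¹ := by
        rw [exp_neg, mul_assoc 2 (solitonRate p ω), two_mul (_ * x), exp_add]
        field_simp
    _ = (2 * p * ω) ^ (p - 2)⁻¹ * exp (-√ω * x) := by
        rw [mul_rpow (by positivity) (exp_pos _).le, ← exp_mul, solitonRate]
        congr 2
        field_simp

theorem isBigO_soliton (hp : 2 < p) (hω : 0 < ω) :
    soliton p ω =O[atTop] fun x => exp (-√ω * x) := by
  refine .of_bound ((2 * p * ω) ^ (p - 2)⁻¹) (.of_forall fun x => ?_)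
  rw [norm_of_nonneg (soliton_pos hp hω x).le, norm_of_nonneg (exp_pos _).le]
  exact soliton_le hp hω x

theorem tendsto_soliton_atTop (hp : 2 < p) (hω : 0 < ω) :
    Tendsto (soliton p ω) atTop (𝓝 0) :=
  (isBigO_soliton hp hω).trans_tendsto <| tendsto_exp_atBot.comp <|
    tendsto_id.const_mul_atTop_of_neg (neg_neg_of_pos (sqrt_pos.2 hω))

theorem integrableOn_soliton_sq (hp : 2 < p) (hω : 0 < ω) (a : ℝ) :
    IntegrableOn (fun x => soliton p ω x ^ 2) (Ioi a) := by
  refine integrable_of_isBigO_exp_neg (b := 2 * √ω) (by positivity)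
    ((contDiff_soliton hp hω (n := 0)).continuous.pow 2).continuousOn ?_
  refine ((isBigO_soliton hp hω).pow 2).congr_right fun x => ?_
  rw [← exp_nat_mul]
  congr 1
  push_cast
  ring

theorem integrableOn_deriv_soliton_sq (hp : 2 < p) (hω : 0 < ω) (a : ℝ) :
    IntegrableOn (fun x => deriv (soliton p ω) x ^ 2) (Ioi a) := by
  refine ((integrableOn_soliton_sq hp hω a).const_mul ω).mono'
    ((measurable_deriv _).pow_const 2).aestronglyMeasurable (.of_forall fun x => ?_)
  have htanh : tanh (solitonRate p ω * x) ^ 2 ≤ 1 := (tanh_sq_lt_one _).le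
  rw [norm_of_nonneg (sq_nonneg _), deriv_soliton hp hω, neg_sq, mul_pow, mul_pow, sq_sqrt hω.le]
  gcongr
  exact mul_le_of_le_one_right hω.le htanh

end Soliton

/-- The logarithmic decay rate `-u' / u` in units of `√ω`; for `u = φ` it is `tanh (κ x)`. -/
def decayRate (ω : ℝ) (u : ℝ → ℝ) (x : ℝ) : ℝ := -deriv u x / (√ω * u x)

section ZeroEnergy

variable {p ω : ℝ} {u : ℝ → ℝ} {s : Set ℝ} {x : ℝ}

theorem rpow_eq_of_energy_eq_zero (hp : 0 < p) (hω : 0 < ω) (hu : 0 < u x)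
    (hE : energy p ω u x = 0) : u x ^ (p - 2) = p * ω / 2 * (1 - decayRate ω u x ^ 2) := by
  have hsplit : u x ^ p = u x ^ (p - 2) * u x ^ 2 := by
    rw [← rpow_add_natCast hu.ne']
    norm_num
  rw [energy, hsplit] at hE
  rw [decayRate, div_pow, mul_pow, sq_sqrt hω.le]
  field_simp at hE ⊢
  linarith

namespace IsPosSolutionOn

theorem hasDerivAt_decayRate (hp : 0 < p) (hω : 0 < ω) (hu : IsPosSolutionOn p ω u s)
    (hs : IsOpen s) (hx : x ∈ s) (hE : energy p ω u x = 0) :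
    HasDerivAt (decayRate ω u) (solitonRate p ω * (1 - decayRate ω u x ^ 2)) x := by
  have hpos := hu.pos x hx
  have hsqrt : 0 < √ω := sqrt_pos.2 hω
  have hpow : u x ^ (p - 1) = p * ω / 2 * (1 - decayRate ω u x ^ 2) * u x := by
    rw [← rpow_eq_of_energy_eq_zero hp hω hpos hE, ← rpow_add_one hpos.ne']
    congr 1
    ring
  have hslope : deriv u x = -(√ω * decayRate ω u x * u x) := by
    rw [decayRate]
    field_simp
  refine ((hu.hasDerivAt_deriv hs hx).neg.div ((hu.hasDerivAt hs hx).const_mul √ω)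
    (mul_pos hsqrt hpos).ne').congr_deriv ?_
  rw [Pi.neg_apply, hpow, hslope, solitonRate]
  nth_rw 1 2 [← sq_sqrt hω.le]
  field_simp
  ring

/-- The decay rate solves the Riccati equation `z' = κ (1 - z ^ 2)`, so `artanh z - κ x` is
constant. -/
theorem exists_eqOn_soliton_of_energy_eq_zero (hp : 2 < p) (hω : 0 < ω)
    (hu : IsPosSolutionOn p ω u s) (hs : IsOpen s) (hs' : IsPreconnected s)
    (hE : ∀ x ∈ s, energy p ω u x = 0) : ∃ ξ, EqOn u (fun x => soliton p ω (x + ξ)) s := by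
  have hp0 : 0 < p := by linarith
  have hκ := solitonRate_pos hp hω
  have hrpow : ∀ x ∈ s, u x ^ (p - 2) = p * ω / 2 * (1 - decayRate ω u x ^ 2) := fun x hx =>
    rpow_eq_of_energy_eq_zero hp0 hω (hu.pos x hx) (hE x hx)
  have hlt : ∀ x ∈ s, 0 < 1 - decayRate ω u x ^ 2 := fun x hx =>
    pos_of_mul_pos_right (hrpow x hx ▸ rpow_pos_of_pos (hu.pos x hx) _) (by positivity)
  have hmem : ∀ x ∈ s, decayRate ω u x ∈ Ioo (-1) 1 := fun x hx =>
    abs_lt.1 ((sq_lt_one_iff_abs_lt_one _).1 (sub_pos.1 (hlt x hx)))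
  have hderiv : ∀ x ∈ s,
      HasDerivAt (fun y => artanh (decayRate ω u y) - solitonRate p ω * y) 0 x := fun x hx => by
    refine (((hasDerivAt_artanh (hmem x hx)).comp x
      (hu.hasDerivAt_decayRate hp0 hω hs hx (hE x hx))).sub
        (hasDerivAt_const_mul (solitonRate p ω))).congr_deriv ?_
    rw [one_div_mul_eq_div, mul_div_cancel_right₀ _ (hlt x hx).ne', sub_self]
  obtain ⟨c, hc⟩ := hs.exists_is_const_of_deriv_eq_zero hs'
    (fun x hx => (hderiv x hx).differentiableAt.differentiableWithinAt)
    fun x hx => (hderiv x hx).deriv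
  refine ⟨c / solitonRate p ω, fun x hx => eq_soliton_of_rpow_eq hp hω (hu.pos x hx) ?_⟩
  rw [mul_add, mul_div_cancel₀ _ hκ.ne', ← hc x hx, add_sub_cancel, tanh_artanh (hmem x hx)]
  exact hrpow x hx

theorem exists_eqOn_Ici_soliton {a : ℝ} (hp : 2 < p) (hω : 0 < ω)
    (hu : IsPosSolutionOn p ω u (Ioi a)) (hcont : Continuous u)
    (hint : IntegrableOn (fun x => u x ^ 2) (Ioi a)) :
    ∃ ξ, EqOn u (fun x => soliton p ω (x + ξ)) (Ici a) := by
  obtain ⟨ξ, hξ⟩ := hu.exists_eqOn_soliton_of_energy_eq_zero hp hω isOpen_Ioi isPreconnected_Ioi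
    fun x hx => hu.energy_eq_zero hp hint hx
  have hcont_soliton : Continuous fun x => soliton p ω (x + ξ) :=
    (contDiff_soliton hp hω (n := 0)).continuous.comp (continuous_add_const ξ)
  exact ⟨ξ, closure_Ioi a ▸ hξ.closure hcont hcont_soliton⟩

end IsPosSolutionOn

end ZeroEnergy

/-- The jump condition `u'(0⁻) - u'(0⁺) = u(0) ^ (q - 1)` created by the point nonlinearity. -/
def HasKink (q : ℝ) (u : ℝ → ℝ) : Prop :=
  ∃ dminus dplus : ℝ, HasDerivWithinAt u dminus (Iic 0) 0 ∧ HasDerivWithinAt u dplus (Ici 0) 0 ∧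
    dminus - dplus = u 0 ^ (q - 1)

section Kink

variable {p q ω ξ η : ℝ} {u : ℝ → ℝ}

theorem hasKink_iff_of_eqOn_soliton (hp : 2 < p) (hω : 0 < ω)
    (hright : EqOn u (fun x => soliton p ω (x + ξ)) (Ici 0))
    (hleft : EqOn u (fun x => soliton p ω (-x + η)) (Iic 0)) :
    HasKink q u ↔
      √ω * tanh (solitonRate p ω * η) + √ω * tanh (solitonRate p ω * ξ) = u 0 ^ (q - 2) := by
  have hξ : u 0 = soliton p ω ξ := by simpa using hright self_mem_Ici
  have hη : u 0 = soliton p ω η := by simpa using hleft self_mem_Iic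
  have hpos : 0 < u 0 := hξ ▸ soliton_pos hp hω ξ
  have hplus : HasDerivWithinAt u (-(√ω * tanh (solitonRate p ω * ξ) * u 0)) (Ici 0) 0 := by
    have h := (hasDerivAt_soliton hp hω (0 + ξ)).comp_add_const 0 ξ
    rw [zero_add, ← hξ] at h
    exact h.hasDerivWithinAt.congr hright (hright self_mem_Ici)
  have hminus : HasDerivWithinAt u (√ω * tanh (solitonRate p ω * η) * u 0) (Iic 0) 0 := by
    have h := (hasDerivAt_soliton hp hω (-0 + η)).comp (0 : ℝ)
      ((hasDerivAt_neg (0 : ℝ)).add_const η)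
    rw [neg_zero, zero_add, ← hη, mul_neg_one, neg_neg] at h
    exact h.hasDerivWithinAt.congr hleft (hleft self_mem_Iic)
  have hpow : u 0 ^ (q - 1) = u 0 ^ (q - 2) * u 0 := by
    rw [← rpow_add_one hpos.ne']
    congr 1
    ring
  constructor
  · rintro ⟨dminus, dplus, hdminus, hdplus, hjump⟩
    rw [(uniqueDiffWithinAt_Iic 0).eq_deriv _ hdminus hminus,
      (uniqueDiffWithinAt_Ici 0).eq_deriv _ hdplus hplus, hpow] at hjump
    exact mul_right_cancel₀ hpos.ne' (by linarith)
  · intro hjump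
    refine ⟨_, _, hminus, hplus, ?_⟩
    rw [hpow, ← hjump]
    ring

theorem hasKink_soliton_abs_iff (hp : 2 < p) (hω : 0 < ω) :
    HasKink q (fun x => soliton p ω (|x| + ξ)) ↔
      2 * √ω * tanh (solitonRate p ω * ξ) = soliton p ω ξ ^ (q - 2) := by
  rw [hasKink_iff_of_eqOn_soliton hp hω (fun x hx => by rw [abs_of_nonneg hx])
    (fun x hx => by rw [abs_of_nonpos hx]), abs_zero, zero_add, ← two_mul, mul_assoc]

/-- Both halves of `u` are translates of the soliton. They agree at `0`, so the translations agree
up to sign, and opposite signs would make `u` differentiable at `0`. -/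
theorem exists_eq_soliton_abs (hp : 2 < p) (hω : 0 < ω) (hu : IsPosSolutionOn p ω u {0}ᶜ)
    (hcont : Continuous u) (hint : Integrable fun x => u x ^ 2) (hkink : HasKink q u) :
    ∃ ξ, u = fun x => soliton p ω (|x| + ξ) := by
  obtain ⟨ξ, hright⟩ := (hu.mono (t := Ioi 0) fun x hx => ne_of_gt hx).exists_eqOn_Ici_soliton
    hp hω hcont hint.integrableOn
  obtain ⟨η, hreflected⟩ := (hu.comp_neg.mono (t := Ioi 0)
    fun x hx => neg_ne_zero.2 (ne_of_gt hx)).exists_eqOn_Ici_soliton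
    hp hω (hcont.comp continuous_neg) hint.comp_neg.integrableOn
  have hleft : EqOn u (fun x => soliton p ω (-x + η)) (Iic 0) := fun x hx => by
    simpa using hreflected (neg_nonneg.2 (mem_Iic.1 hx))
  have hξ : u 0 = soliton p ω ξ := by simpa using hright self_mem_Ici
  have hη : u 0 = soliton p ω η := by simpa using hleft self_mem_Iic
  have hjump := (hasKink_iff_of_eqOn_soliton hp hω hright hleft).1 hkink
  have hηξ : η = ξ := by
    refine (abs_eq_abs.1 (abs_eq_abs_of_soliton_eq hp hω (hη.symm.trans hξ))).resolve_right ?_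
    rintro rfl
    rw [mul_neg, tanh_neg, mul_neg, neg_add_cancel] at hjump
    exact (rpow_pos_of_pos (hξ ▸ soliton_pos hp hω ξ) (q - 2)).ne hjump
  refine ⟨ξ, funext fun x => ?_⟩
  rcases le_total 0 x with hx | hx
  · rw [hright hx, abs_of_nonneg hx]
  · rw [hleft hx, abs_of_nonpos hx, hηξ]

theorem isPosSolutionOn_soliton_abs (hp : 2 < p) (hω : 0 < ω) (ξ : ℝ) :
    IsPosSolutionOn p ω (fun x => soliton p ω (|x| + ξ)) {0}ᶜ :=
  (((isPosSolutionOn_soliton hp hω).comp_add_const ξ).mono (subset_univ (Ioi 0))).comp_abs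

theorem isH1_soliton_abs (hp : 2 < p) (hω : 0 < ω) (ξ : ℝ) :
    IsH1 (fun x => soliton p ω (|x| + ξ)) (deriv fun x => soliton p ω (|x| + ξ)) := by
  refine isH1_comp_abs (f := fun x => soliton p ω (x + ξ))
    ((contDiff_soliton hp hω).comp (by fun_prop))
    (integrableOn_Ioi_comp_add_const (integrableOn_soliton_sq hp hω (0 + ξ))) ?_
  simp only [deriv_comp_add_const]
  exact integrableOn_Ioi_comp_add_const (integrableOn_deriv_soliton_sq hp hω (0 + ξ))

theorem existsUnique_two_mul_sqrt_mul_tanh_eq_soliton_rpow (hp : 2 < p) (hq : 2 < q) (hω : 0 < ω) :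
    ∃! ξ, 2 * √ω * tanh (solitonRate p ω * ξ) = soliton p ω ξ ^ (q - 2) := by
  have hκ := solitonRate_pos hp hω
  have hq2 : 0 < q - 2 := by linarith
  have hlim := (tendsto_soliton_atTop hp hω).rpow_const (p := q - 2) (Or.inr hq2.le)
  rw [zero_rpow hq2.ne'] at hlim
  refine existsUnique_eq_of_strictMono_of_antitoneOn (a := 0) ?_ ?_ (by simp) ?_ ?_ ?_ hlim
  · exact fun x y hxy =>
      mul_lt_mul_of_pos_left (strictMono_tanh (mul_lt_mul_of_pos_left hxy hκ)) (by positivity)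
  · exact continuous_iff_continuousAt.2 fun x =>
      ((hasDerivAt_tanh_solitonRate_mul p ω x).const_mul (2 * √ω)).continuousAt
  · exact fun x hx y hy hxy => rpow_le_rpow (soliton_pos hp hω y).le
      ((strictAntiOn_soliton hp hω).antitoneOn hx hy hxy) hq2.le
  · exact (contDiff_soliton hp hω (n := 0)).continuous.rpow_const fun _ => Or.inr hq2.le
  · exact fun x => rpow_pos_of_pos (soliton_pos hp hω x) _

end Kink

theorem stmt17_general (p q ω : ℝ) (hp : 2 < p) (hq : 2 < q) (hω : 0 < ω) :
    ∃! u : ℝ → ℝ,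
      (∃ u' : ℝ → ℝ, IsH1 u u') ∧
      (∀ x, 0 < u x) ∧
      ContDiffOn ℝ 2 u {(0 : ℝ)}ᶜ ∧
      (∀ x : ℝ, x ≠ 0 → deriv (deriv u) x + u x ^ (p - 1) = ω * u x) ∧
      (∃ dminus dplus : ℝ,
        HasDerivWithinAt u dminus (Set.Iic 0) 0 ∧
        HasDerivWithinAt u dplus (Set.Ici 0) 0 ∧
        dminus - dplus = u 0 ^ (q - 1)) := by
  obtain ⟨ξ, hξ, hξ_unique⟩ := existsUnique_two_mul_sqrt_mul_tanh_eq_soliton_rpow hp hq hω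
  have hsol := isPosSolutionOn_soliton_abs hp hω ξ
  refine ⟨fun x => soliton p ω (|x| + ξ), ⟨⟨_, isH1_soliton_abs hp hω ξ⟩,
    fun x => soliton_pos hp hω _, hsol.contDiffOn, hsol.ode,
    (hasKink_soliton_abs_iff hp hω).2 hξ⟩, ?_⟩
  rintro u ⟨⟨_, hcont, hint, -, -⟩, hpos, hdiff, hode, hkink⟩
  obtain ⟨η, rfl⟩ := exists_eq_soliton_abs hp hω ⟨fun x _ => hpos x, hdiff, hode⟩ hcont hint hkink
  rw [hξ_unique η ((hasKink_soliton_abs_iff hp hω).1 hkink)]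

theorem stmt17 (p q ω : ℝ) (hp : 2 < p) (hp' : p ≤ 6) (hq : 2 < q) (hq' : q ≤ 4)
    (hω : 0 < ω) :
    ∃! u : ℝ → ℝ,
      (∃ u' : ℝ → ℝ, IsH1 u u') ∧
      (∀ x, 0 < u x) ∧
      ContDiffOn ℝ 2 u {(0 : ℝ)}ᶜ ∧
      (∀ x : ℝ, x ≠ 0 → deriv (deriv u) x + u x ^ (p - 1) = ω * u x) ∧
      (∃ dminus dplus : ℝ,
        HasDerivWithinAt u dminus (Set.Iic 0) 0 ∧
        HasDerivWithinAt u dplus (Set.Ici 0) 0 ∧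
        dminus - dplus = u 0 ^ (q - 1)) :=
  stmt17_general p q ω hp hq hω
end
end
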